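/- For every k∈ℕ, the k-bounded state reachability problem for DCPSs is decidable: for every DCPS M=(Q,Γ,Δ,q₀,γ₀) and every set F⊆Q, it is decidable whether there exists a state q∈F that is k-bounded reachable by M. -/

import Mathlib

namespace DCPSFormal

/-- Rules of a dynamic network of concurrent pushdown systems (DCPS):
creation rules `⟨q,γ⟩ → ⟨q',u⟩ ▷ α` (with `α = none` meaning `ε`),
interruption rules `⟨q,γ⟩ ↦ ⟨q',u⟩`, and resumption rules `q ↦ q' ◁ γ`. -/
inductive Rule (Q Γ : Type*) where
  | cr : Q → Γ → Q → List Γ → Option Γ → Rule Q Γ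
  | intr : Q → Γ → Q → List Γ → Rule Q Γ
  | res : Q → Γ → Q → Rule Q Γ

/-- A DCPS: a set of rules, an initial state and an initial stack symbol. -/
structure DCPS (Q Γ : Type*) where
  rules : Set (Rule Q Γ)
  q0 : Q
  γ0 : Γ

/-- Well-formedness of a DCPS: every pushed word has length at most 2. -/
def IsDCPSWf {Q Γ : Type*} (M : DCPS Q Γ) : Prop :=
  ∀ r ∈ M.rules,
    match r with
    | .cr _ _ _ u _ => u.length ≤ 2
    | .intr _ _ _ u => u.length ≤ 2
    | .res _ _ _ => True

/-- A DCFS is a DCPS in which every pushed word has length at most 1. -/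
def IsDCFS {Q Γ : Type*} (M : DCPS Q Γ) : Prop :=
  ∀ r ∈ M.rules,
    match r with
    | .cr _ _ _ u _ => u.length ≤ 1
    | .intr _ _ _ u => u.length ≤ 1
    | .res _ _ _ => True

/-- A configuration of a DCPS: global state, optional active local configuration
(stack content and switch number), and a finitely supported multiset of pending
local configurations. -/
structure Config (Q Γ : Type*) where
  state : Q
  active : Option (List Γ × ℕ)
  idle : (List Γ × ℕ) →₀ ℕ

/-- The thread possibly spawned by a creation rule with creation component `α`
when the active thread has switch number `i`. -/
noncomputable def spawnOf {Γ : Type*} (α : Option Γ) (i : ℕ) : (List Γ × ℕ) →₀ ℕ :=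
  match α with
  | none => 0
  | some a => Finsupp.single ([a], i + 1) 1

/-- The transition system `T(M)` of a DCPS, with steps labelled by rules. -/
inductive Step {Q Γ : Type*} (M : DCPS Q Γ) : Rule Q Γ → Config Q Γ → Config Q Γ → Prop
  | cr {q γ q' u α w i V} :
      Rule.cr q γ q' u α ∈ M.rules →
      Step M (.cr q γ q' u α) ⟨q, some (γ :: w, i), V⟩ ⟨q', some (u ++ w, i), V + spawnOf α i⟩
  | intr {q γ q' u w i V} :
      Rule.intr q γ q' u ∈ M.rules →
      Step M (.intr q γ q' u) ⟨q, some (γ :: w, i), V⟩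
        ⟨q', none, V + Finsupp.single (u ++ w, i + 1) 1⟩
  | res {q γ q' w i V} :
      Rule.res q γ q' ∈ M.rules →
      Step M (.res q γ q') ⟨q, none, V + Finsupp.single (γ :: w, i) 1⟩ ⟨q', some (γ :: w, i), V⟩

/-- `c ∈ Conf_I(M)`: the active thread exists and its switch number lies in `I`. -/
def ActiveIn {Q Γ : Type*} (I : Set ℕ) (c : Config Q Γ) : Prop :=
  ∃ w i, c.active = some (w, i) ∧ i ∈ I

/-- The `I`-bounded transition system `T_I(M)`. -/
def StepIn {Q Γ : Type*} (M : DCPS Q Γ) (I : Set ℕ) (r : Rule Q Γ) (c c' : Config Q Γ) : Prop :=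
  Step M r c c' ∧ (ActiveIn I c ∨ ActiveIn I c')

/-- Reachability in `T(M)`. -/
def Reaches {Q Γ : Type*} (M : DCPS Q Γ) : Config Q Γ → Config Q Γ → Prop :=
  Relation.ReflTransGen (fun a b => ∃ r, Step M r a b)

/-- Reachability in `T_I(M)`. -/
def ReachesIn {Q Γ : Type*} (M : DCPS Q Γ) (I : Set ℕ) : Config Q Γ → Config Q Γ → Prop :=
  Relation.ReflTransGen (fun a b => ∃ r, StepIn M I r a b)

/-- The initial configuration of a DCPS. -/
noncomputable def initConfig {Q Γ : Type*} (M : DCPS Q Γ) : Config Q Γ :=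
  ⟨M.q0, none, Finsupp.single ([M.γ0], 0) 1⟩

/-- `q` is reachable by `M`. -/
def StateReachable {Q Γ : Type*} (M : DCPS Q Γ) (q : Q) : Prop :=
  ∃ c, Reaches M (initConfig M) c ∧ c.active = none ∧ c.state = q

/-- `q` is `k`-bounded reachable by `M`. -/
def KBoundedReachable {Q Γ : Type*} (M : DCPS Q Γ) (k : ℕ) (q : Q) : Prop :=
  ∃ c, ReachesIn M {i | i ≤ k} (initConfig M) c ∧ c.active = none ∧ c.state = q

/-- `q` is `k`-stratified reachable by `M`. -/
def KStratifiedReachable {Q Γ : Type*} (M : DCPS Q Γ) (k : ℕ) (q : Q) : Prop :=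
  ∃ c : ℕ → Config Q Γ, c 0 = initConfig M ∧
    (∀ l ≤ k, ReachesIn M {l} (c l) (c (l + 1))) ∧
    (c (k + 1)).active = none ∧ (c (k + 1)).state = q

/-- A labelled run in a labelled transition system. -/
inductive LRun {C L : Type*} (step : L → C → C → Prop) : List L → C → C → Prop
  | nil (c) : LRun step [] c c
  | cons {l τ c c' c''} : step l c c' → LRun step τ c' c'' → LRun step (l :: τ) c c''

/-- A pushdown automaton with states `S`, input alphabet `A` and stack alphabet `Γ`. -/
structure PDA (S A Γ : Type*) where
  trans : Set ((S × Γ) × Option A × (S × List Γ))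
  p0 : S
  γ0 : Γ
  final : Set S

/-- A single (possibly `ε`-labelled) step of a PDA. -/
inductive PDAStep {S A Γ : Type*} (P : PDA S A Γ) :
    Option A → (S × List Γ) → (S × List Γ) → Prop
  | mk {p γ a p' u w} : ((p, γ), a, (p', u)) ∈ P.trans →
      PDAStep P a (p, γ :: w) (p', u ++ w)

/-- A run of a PDA labelled by the word obtained by concatenating all non-`ε` labels. -/
inductive PDATrace {S A Γ : Type*} (P : PDA S A Γ) :
    List A → (S × List Γ) → (S × List Γ) → Prop
  | nil (c) : PDATrace P [] c c
  | eps {v c c' c''} : PDAStep P none c c' → PDATrace P v c' c'' → PDATrace P v c c''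
  | cons {a v c c' c''} : PDAStep P (some a) c c' → PDATrace P v c' c'' →
      PDATrace P (a :: v) c c''

/-- The language of a PDA (acceptance by final state). -/
def PDALang {S A Γ : Type*} (P : PDA S A Γ) : Set (List A) :=
  { v | ∃ p w, p ∈ P.final ∧ PDATrace P v (P.p0, [P.γ0]) (p, w) }

/-- A finite state automaton. -/
structure FSA (S A : Type*) where
  trans : Set (S × Option A × S)
  init : Set S
  final : Set S

/-- A run of an FSA labelled by a word (`ε`-labels contribute nothing). -/
inductive FSARun {S A : Type*} (Au : FSA S A) : List A → S → S → Prop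
  | nil (s) : FSARun Au [] s s
  | eps {v s s' s''} : (s, none, s') ∈ Au.trans → FSARun Au v s' s'' → FSARun Au v s s''
  | cons {a v s s' s''} : (s, some a, s') ∈ Au.trans → FSARun Au v s' s'' →
      FSARun Au (a :: v) s s''

/-- The language of an FSA. -/
def FSALang {S A : Type*} (Au : FSA S A) : Set (List A) :=
  { v | ∃ s ∈ Au.init, ∃ s' ∈ Au.final, FSARun Au v s s' }

/-- A vector addition system with states of dimension `n`. -/
structure VASS (n : ℕ) (S A : Type*) where
  δ : S → A → S × (Fin n → ℤ)
  s0 : S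
  v0 : Fin n → ℕ

/-- A step of a VASS: `(q₁,u₁) →ᵃ (q₂,u₂)` iff `δ(q₁,a) = (q₂, u₂ - u₁)`. -/
def VStep {n : ℕ} {S A : Type*} (V : VASS n S A) (a : A) :
    (S × (Fin n → ℕ)) → (S × (Fin n → ℕ)) → Prop :=
  fun c c' => (V.δ c.1 a).1 = c'.1 ∧ ∀ i, (c'.2 i : ℤ) = (c.2 i : ℤ) + (V.δ c.1 a).2 i

/-- Reachability in the transition system of a VASS. -/
def VReaches {n : ℕ} {S A : Type*} (V : VASS n S A) :
    (S × (Fin n → ℕ)) → (S × (Fin n → ℕ)) → Prop :=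
  Relation.ReflTransGen (fun c c' => ∃ a, VStep V a c c')

/-- A state `s` is reachable by the VASS `V`. -/
def VStateReachable {n : ℕ} {S A : Type*} (V : VASS n S A) (s : S) : Prop :=
  ∃ u, VReaches V (V.s0, V.v0) (s, u)

/-- The `i`-th unit vector. -/
def unitVec {m : ℕ} (i : Fin m) : Fin m → ℤ := fun j => if j = i then 1 else 0

/-- Encoded rules of a DCPS over natural-number states and stack symbols:
`inl` encodes a creation rule, `inr (inl _)` an interruption rule, and
`inr (inr _)` a resumption rule. -/
abbrev RuleE := ((ℕ × ℕ) × (ℕ × List ℕ) × Option ℕ) ⊕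
  (((ℕ × ℕ) × (ℕ × List ℕ)) ⊕ (ℕ × ℕ × ℕ))

/-- Decoding an encoded rule. -/
def decodeRule : RuleE → Rule ℕ ℕ
  | .inl ((q, γ), (q', u), α) => .cr q γ q' u α
  | .inr (.inl ((q, γ), (q', u))) => .intr q γ q' u
  | .inr (.inr (q, γ, q')) => .res q γ q'

/-- An instance of the reachability problems: a finite list of rules, an initial
state and an initial stack symbol, and a target set `F` given as a list of states. -/
abbrev Inst := List RuleE × (ℕ × ℕ) × List ℕ

/-- The DCPS described by an instance. -/
def instDCPS (x : Inst) : DCPS ℕ ℕ where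
  rules := { r | ∃ e ∈ x.1, decodeRule e = r }
  q0 := x.2.1.1
  γ0 := x.2.1.2

abbrev Idl (β : Type) := List β × List β

def inI {β : Type} [DecidableEq β] (m : Multiset β) (a : Idl β) : Prop :=
  ∀ p, p ∉ a.2 → m.count p ≤ a.1.count p

def leI {β : Type} [DecidableEq β] (a b : Idl β) : Prop :=
  (∀ p ∈ a.2, p ∈ b.2) ∧ ∀ p ∈ a.1, p ∈ b.2 ∨ a.1.count p ≤ b.1.count p

def covers {α β : Type} [DecidableEq β] (D : List (α × Idl β)) (l : α) (a : Idl β) : Prop :=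
  ∃ e ∈ D, e.1 = l ∧ leI a e.2

section
variable {β : Type} [DecidableEq β]

theorem leI_iff {a b : Idl β} : leI a b ↔
    (∀ p ∈ a.2, p ∈ b.2) ∧ ∀ p, p ∉ b.2 → a.1.count p ≤ b.1.count p := by
  unfold leI
  refine and_congr_right fun _ => ⟨fun h p hp => ?_, fun h p hp => ?_⟩
  · by_cases hpa : p ∈ a.1
    · exact (h p hpa).resolve_left hp
    · rw [List.count_eq_zero_of_not_mem hpa]; exact Nat.zero_le _
  · by_cases hb : p ∈ b.2
    · exact Or.inl hb
    · exact Or.inr (h p hb)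

theorem inI.mono {m m' : Multiset β} {a : Idl β} (h : inI m a) (hm : m' ≤ m) : inI m' a :=
  fun p hp => (Multiset.count_le_of_le p hm).trans (h p hp)

theorem inI_of_leI {m : Multiset β} {a b : Idl β} (h : inI m a) (hab : leI a b) : inI m b := by
  rw [leI_iff] at hab
  intro p hp
  exact (h p (fun h' => hp (hab.1 p h'))).trans (hab.2 p hp)

theorem inI_zero (a : Idl β) : inI 0 a := by
  intro p _; simp

theorem inI_coe (a : Idl β) : inI (a.1 : Multiset β) a := by
  intro p _; simp

theorem inI_add {m n : Multiset β} {a b : Idl β} (h : inI m a) (h' : inI n b) :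
    inI (m + n) (a.1 ++ b.1, a.2 ++ b.2) := by
  intro p hp
  simp only [List.mem_append, not_or] at hp
  simp only [Multiset.count_add, List.count_append]
  exact add_le_add (h p hp.1) (h' p hp.2)

/-- splitting -/
theorem inI_split {m : Multiset β} {a b : Idl β} (h : inI m (a.1 ++ b.1, a.2 ++ b.2)) :
    ∃ m1 m2, inI m1 a ∧ inI m2 b ∧ m ≤ m1 + m2 := by
  refine ⟨m.filter (fun p => p ∈ a.2) + (a.1 : Multiset β),
    m.filter (fun p => p ∈ b.2) + (b.1 : Multiset β), ?_, ?_, ?_⟩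
  · intro p hp; simp [Multiset.count_filter, hp]
  · intro p hp; simp [Multiset.count_filter, hp]
  · rw [Multiset.le_iff_count]
    intro p
    have := h p
    simp only [List.mem_append, not_or, List.count_append, and_imp] at this
    simp only [Multiset.count_add, Multiset.count_filter, Multiset.coe_count]
    by_cases h1 : p ∈ a.2
    · simp [h1]; omega
    · by_cases h2 : p ∈ b.2
      · simp [h2]; omega
      · simp [h1, h2]; exact this h1 h2

/-- Firing a transition, soundness. -/
theorem fire_sound {p : β} {m0 s : Multiset β} {a b r : Idl β} (h : inI (p ::ₘ m0) a)
    (hs : inI s r) (hle : leI (r.1 ++ a.1, r.2 ++ a.2) (p :: b.1, b.2)) : inI (s + m0) b := by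
  rw [leI_iff] at hle
  intro x hx
  have h1 := hle.2 x hx
  have h2 : x ∉ a.2 := fun h' => hx (hle.1 x (by simp [h']))
  have h3 : x ∉ r.2 := fun h' => hx (hle.1 x (by simp [h']))
  have h4 := h x h2
  have h5 := hs x h3
  simp only [List.count_append, List.count_cons, Multiset.count_cons, Multiset.count_add,
    beq_iff_eq] at *
  by_cases hxp : x = p
  · subst hxp; simp at *; omega
  · have : ¬ p = x := fun h => hxp h.symm
    simp [hxp, this] at *; omega

/-- Firing a transition, completeness. -/
theorem fire_complete {p : β} {X Y : Multiset β → Prop} {a r : Idl β}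
    (hX : ∀ m, inI m a → X m) (hp : p ∈ a.1 ∨ p ∈ a.2)
    (hY : ∀ m m', m' ≤ m → Y m → Y m')
    (hstep : ∀ m0 s, X (p ::ₘ m0) → inI s r → Y (s + m0)) :
    (∀ m, inI m (r.1 ++ a.1.erase p, r.2 ++ a.2) → Y m) ∧
    ∀ b : Idl β, leI (r.1 ++ a.1.erase p, r.2 ++ a.2) b →
      leI (r.1 ++ a.1, r.2 ++ a.2) (p :: b.1, b.2) := by
  constructor
  · intro m hm
    obtain ⟨m1, m2, h1, h2, h3⟩ := inI_split (a := r) (b := (a.1.erase p, a.2)) hm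
    refine hY _ _ h3 (hstep _ _ (hX _ ?_) h1)
    intro x hx
    have := h2 x hx
    simp only [Multiset.count_cons, List.count_erase] at *
    by_cases hxp : x = p
    · subst hxp
      have h0 : 0 < a.1.count x := List.count_pos_iff.2 (hp.resolve_right hx)
      simp only [beq_self_eq_true, if_true] at this ⊢; omega
    · have h0 : ¬ p = x := fun h => hxp h.symm
      simp only [hxp, if_false, beq_iff_eq, h0] at this ⊢; omega
  · intro b hb
    rw [leI_iff] at *
    refine ⟨hb.1, fun x hx => ?_⟩
    have := hb.2 x hx
    simp only [List.count_append, List.count_cons, List.count_erase, beq_iff_eq] at *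
    by_cases hxp : p = x <;> simp [hxp] at * <;> omega

theorem decomp1 (P : Finset β) (X : Multiset β → Prop) (hX : ∀ m m', m' ≤ m → X m → X m') :
    ∃ D : List (Idl β), (∀ a ∈ D, (∀ m, inI m a → X m) ∧ (∀ p ∈ a.1, p ∈ P) ∧ ∀ p ∈ a.2, p ∈ P) ∧
      ∀ a : Idl β, (∀ m, inI m a → X m) → (∀ p ∈ a.1, p ∈ P) → (∀ p ∈ a.2, p ∈ P) →
        ∃ b ∈ D, leI a b := by
  classical
  -- Dickson
  obtain ⟨N, hN⟩ : ∃ N : ℕ, ∀ m : Multiset β, (∀ p ∈ m, p ∈ P) → ¬ X m →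
      ∃ b ≤ m, ¬ X b ∧ ∀ p, b.count p ≤ N := by
    let toM : (P → ℕ) → Multiset β := fun v => ∑ p : P, v p • ({(p : β)} : Multiset β)
    have hcount : ∀ v (p : P), (toM v).count (p : β) = v p := by
      intro v p
      simp only [toM, Multiset.count_sum', Multiset.count_nsmul, Multiset.count_singleton]
      rw [Finset.sum_eq_single p]
      · simp
      · intro b _ hb; simp [Subtype.coe_inj, hb.symm]
      · simp
    have hcount' : ∀ v (p : β), p ∉ P → (toM v).count p = 0 := by
      intro v p hp
      simp only [toM, Multiset.count_sum', Multiset.count_nsmul, Multiset.count_singleton]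
      refine Finset.sum_eq_zero fun b _ => ?_
      have : p ≠ b := fun h => hp (h ▸ b.2)
      simp [this]
    let B : Set (P → ℕ) := {v | Minimal (fun v => ¬ X (toM v)) v}
    have hB : B.Finite := by
      have hac : IsAntichain (· ≤ ·) B := by
        intro a ha b hb hab hle
        exact hab (le_antisymm hle (hb.2 ha.1 hle))
      exact WellQuasiOrderedLE.finite_of_isAntichain hac
    obtain ⟨N, hN⟩ : ∃ N, ∀ v ∈ B, ∀ p, v p ≤ N := by
      refine ⟨hB.toFinset.sup (fun v => Finset.univ.sup v), fun v hv p => ?_⟩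
      refine le_trans (Finset.le_sup (f := v) (Finset.mem_univ p)) ?_
      exact Finset.le_sup (f := fun v : P → ℕ => Finset.univ.sup v) (hB.mem_toFinset.2 hv)
    refine ⟨N, fun m hm hXm => ?_⟩
    have hmv : toM (fun p : P => m.count (p : β)) = m := by
      ext p
      by_cases hp : p ∈ P
      · exact hcount _ ⟨p, hp⟩
      · rw [hcount' _ _ hp, Multiset.count_eq_zero_of_notMem (fun h => hp (hm p h))]
    obtain ⟨b, hb, hbmin⟩ := exists_minimal_le_of_wellFoundedLT (fun v => ¬ X (toM v))
      (fun p : P => m.count (p : β)) (by rw [hmv]; exact hXm)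
    refine ⟨toM b, ?_, hbmin.1, fun p => ?_⟩
    · rw [Multiset.le_iff_count]
      intro p
      by_cases hp : p ∈ P
      · rw [hcount b ⟨p, hp⟩]; exact hb ⟨p, hp⟩
      · rw [hcount' _ _ hp]; exact Nat.zero_le _
    · by_cases hp : p ∈ P
      · rw [hcount b ⟨p, hp⟩]; exact hN b hbmin _
      · rw [hcount' _ _ hp]; exact Nat.zero_le _
  let cand : Finset (Idl β) :=
    ((Finset.Iic (N • P.val)) ×ˢ P.powerset).image (fun z => (z.1.toList, z.2.toList))
  refine ⟨(cand.filter (fun a => (∀ m, inI m a → X m))).toList, ?_, ?_⟩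
  · intro a ha
    simp only [Finset.mem_toList, Finset.mem_filter, cand, Finset.mem_image, Finset.mem_product,
      Finset.mem_Iic, Finset.mem_powerset] at ha
    obtain ⟨⟨z, ⟨hz1, hz2⟩, rfl⟩, h2⟩ := ha
    refine ⟨h2, fun p hp => ?_, fun p hp => ?_⟩
    · have := Multiset.mem_of_le hz1 (by simpa using hp)
      exact Multiset.mem_of_mem_nsmul this
    · exact hz2 (by simpa using hp)
  · intro a ha ha1 ha2
    let W' : Finset β := P.filter (fun p => p ∈ a.2 ∨ N ≤ a.1.count p)
    let A' : Multiset β := (a.1 : Multiset β).filter (fun p => p ∉ W')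
    refine ⟨(A'.toList, W'.toList), ?_, ?_⟩
    · simp only [Finset.mem_toList, Finset.mem_filter, cand, Finset.mem_image, Finset.mem_product,
        Finset.mem_Iic, Finset.mem_powerset]
      refine ⟨⟨(A', W'), ⟨?_, Finset.filter_subset _ _⟩, rfl⟩, ?_⟩
      · rw [Multiset.le_iff_count]
        intro p
        by_cases hp : p ∈ A'
        · simp only [A', Multiset.mem_filter, Multiset.mem_coe, W', Finset.mem_filter, not_and,
            not_or, not_le] at hp
          have hpP := ha1 p hp.1
          have := (hp.2 hpP).2
          have h1 : P.val.count p = 1 := Multiset.count_eq_one_of_mem P.nodup hpP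
          rw [Multiset.count_nsmul, h1]
          have : A'.count p ≤ (a.1 : Multiset β).count p :=
            Multiset.count_le_of_le _ (Multiset.filter_le _ _)
          simp at this
          simp; omega
        · rw [Multiset.count_eq_zero_of_notMem hp]; exact Nat.zero_le _
      · intro m hm
        have hmc : ∀ p, p ∉ W' → m.count p ≤ a.1.count p := by
          intro p hp
          have := hm p (by simpa using hp)
          rw [← Multiset.coe_count] at this
          simp only [Multiset.coe_toList, A'] at this
          refine this.trans ?_
          rw [← Multiset.coe_count]
          exact Multiset.count_le_of_le _ (Multiset.filter_le _ _)
        by_contra hXm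
        obtain ⟨b, hbm, hXb, hbN⟩ := hN m (by
          intro p hp
          by_contra hpP
          have h1 := hmc p (fun h => hpP (Finset.mem_filter.1 h).1)
          rw [List.count_eq_zero_of_not_mem (fun h => hpP (ha1 p h))] at h1
          exact (Multiset.count_pos.2 hp).ne' (Nat.le_zero.1 h1)) hXm
        apply hXb
        apply ha
        intro p hp
        by_cases hpW : p ∈ W'
        · rcases (Finset.mem_filter.1 hpW).2 with h | h
          · exact absurd h hp
          · exact (hbN p).trans h
        · exact (Multiset.count_le_of_le _ hbm).trans (hmc p hpW)
    · rw [leI_iff]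
      refine ⟨fun p hp => by simp [W', ha2 p hp, hp], fun p hp => ?_⟩
      have hp' : p ∉ W' := by simpa using hp
      rw [← Multiset.coe_count (l := A'.toList)]
      simp only [Multiset.coe_toList, A', Multiset.count_filter, hp', not_false_iff, if_true,
        Multiset.coe_count, le_refl]

theorem decomp {α : Type} (L : Finset α) (P : Finset β) (X : α → Multiset β → Prop)
    (hX : ∀ l m m', m' ≤ m → X l m → X l m') :
    ∃ D : List (α × Idl β),
      (∀ e ∈ D, e.1 ∈ L ∧ (∀ m, inI m e.2 → X e.1 m) ∧ (∀ p ∈ e.2.1, p ∈ P) ∧ ∀ p ∈ e.2.2, p ∈ P) ∧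
      ∀ l ∈ L, ∀ a : Idl β, (∀ m, inI m a → X l m) → (∀ p ∈ a.1, p ∈ P) → (∀ p ∈ a.2, p ∈ P) →
        covers D l a := by
  choose D h1 h2 using fun l => decomp1 P (X l) (hX l)
  refine ⟨L.toList.flatMap fun l => (D l).map fun a => (l, a), ?_, ?_⟩
  · intro e he
    simp only [List.mem_flatMap, Finset.mem_toList, List.mem_map] at he
    obtain ⟨l, hl, a, ha, rfl⟩ := he
    exact ⟨hl, h1 l a ha⟩
  · intro l hl a ha h3 h4
    obtain ⟨b, hb, hab⟩ := h2 l a ha h3 h4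
    refine ⟨(l, b), ?_, rfl, hab⟩
    simp only [List.mem_flatMap, Finset.mem_toList, List.mem_map]
    exact ⟨l, hl, b, hb, rfl⟩
end

abbrev Ctrl := ℕ × ℕ
abbrev Atom := ℕ × ℕ
abbrev Skel := List (ℕ × ℕ)

def spA (α : Option ℕ) (j : ℕ) : List Atom := α.toList.map fun a => (a, j)

def thr (g : Atom) : List ℕ × ℕ := ([g.1], g.2)

/-- Multiset version of `k`-bounded reachability. -/
inductive MR (M : DCPS ℕ ℕ) (k : ℕ) : ℕ → Option (List ℕ × ℕ) → Multiset (List ℕ × ℕ) → Prop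
  | init : MR M k M.q0 none {([M.γ0], 0)}
  | cr {q γ q' u α w i V} : Rule.cr q γ q' u α ∈ M.rules → i ≤ k →
      MR M k q (some (γ :: w, i)) V →
      MR M k q' (some (u ++ w, i)) (((spA α (i + 1) : List Atom) : Multiset Atom).map thr + V)
  | intr {q γ q' u w i V} : Rule.intr q γ q' u ∈ M.rules → i ≤ k →
      MR M k q (some (γ :: w, i)) V → MR M k q' none ((u ++ w, i + 1) ::ₘ V)
  | res {q γ q' w i V} : Rule.res q γ q' ∈ M.rules → i ≤ k →
      MR M k q none ((γ :: w, i) ::ₘ V) → MR M k q' (some (γ :: w, i)) V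

theorem spawnOf_eq (α : Option ℕ) (i : ℕ) :
    Finsupp.toMultiset (spawnOf α i) = ((spA α (i + 1) : List Atom) : Multiset Atom).map thr := by
  cases α <;> simp [spawnOf, spA, thr, Finsupp.toMultiset_single]

theorem kbr_iff (M : DCPS ℕ ℕ) (k q : ℕ) : KBoundedReachable M k q ↔ ∃ V, MR M k q none V := by
  constructor
  · rintro ⟨c, hc, hn, rfl⟩
    refine ⟨Finsupp.toMultiset c.idle, ?_⟩
    rw [← hn]
    clear hn
    induction hc with
    | refl =>
      simp only [initConfig, Finsupp.toMultiset_single, one_smul]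
      exact MR.init
    | tail _ hs ih =>
      obtain ⟨r, hs, hI⟩ := hs
      cases hs with
      | @cr q γ q' u α w i V hr =>
        simp only [ActiveIn, Option.some.injEq, Prod.mk.injEq, Set.mem_ofPred_eq] at hI
        have hi : i ≤ k := by
          rcases hI with ⟨_, _, ⟨_, rfl⟩, h⟩ | ⟨_, _, ⟨_, rfl⟩, h⟩ <;> exact h
        have := MR.cr hr hi ih
        simpa [spawnOf_eq, add_comm] using this
      | @intr q γ q' u w i V hr =>
        simp only [ActiveIn, Option.some.injEq, Prod.mk.injEq, Set.mem_ofPred_eq] at hI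
        have hi : i ≤ k := by
          rcases hI with ⟨_, _, ⟨_, rfl⟩, h⟩ | ⟨_, _, h, _⟩
          · exact h
          · cases h
        have := MR.intr hr hi ih
        simpa [Finsupp.toMultiset_single, add_comm, ← Multiset.singleton_add] using this
      | @res q γ q' w i V hr =>
        simp only [ActiveIn, Option.some.injEq, Prod.mk.injEq, Set.mem_ofPred_eq] at hI
        have hi : i ≤ k := by
          rcases hI with ⟨_, _, h, _⟩ | ⟨_, _, ⟨_, rfl⟩, h⟩
          · cases h
          · exact h
        refine MR.res hr hi ?_
        simpa [Finsupp.toMultiset_single, add_comm, ← Multiset.singleton_add] using ih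
  · rintro ⟨V, hV⟩
    suffices H : ∀ q a V, MR M k q a V →
        ReachesIn M {i | i ≤ k} (initConfig M) ⟨q, a, Multiset.toFinsupp V⟩ from
      ⟨_, H _ _ _ hV, rfl, rfl⟩
    intro q a V h
    induction h with
    | init =>
      simp only [Multiset.toFinsupp_singleton]
      exact Relation.ReflTransGen.refl
    | @cr q γ q' u α w i V hr hi _ ih =>
      refine ih.tail ⟨Rule.cr q γ q' u α, ?_, Or.inl ⟨_, _, rfl, hi⟩⟩
      have : Multiset.toFinsupp (((spA α (i + 1) : List Atom) : Multiset Atom).map thr + V)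
          = Multiset.toFinsupp V + spawnOf α i := by
        rw [← spawnOf_eq, map_add, Finsupp.toMultiset_toFinsupp, add_comm]
      rw [this]
      exact Step.cr hr
    | @intr q γ q' u w i V hr hi _ ih =>
      refine ih.tail ⟨Rule.intr q γ q' u, ?_, Or.inl ⟨_, _, rfl, hi⟩⟩
      rw [← Multiset.singleton_add, map_add, Multiset.toFinsupp_singleton, add_comm]
      exact Step.intr hr
    | @res q γ q' w i V hr hi _ ih =>
      refine ih.tail ⟨Rule.res q γ q', ?_, Or.inr ⟨_, _, rfl, hi⟩⟩
      rw [← Multiset.singleton_add, map_add, Multiset.toFinsupp_singleton, add_comm]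
      exact Step.res hr

/-- Big-step behaviours of threads. Controls: `(0,q)` running, `(1,q)` waiting, `(2,0)` done. -/
inductive Beh (R : Set (Rule ℕ ℕ)) (S : Set ℕ) (k : ℕ) :
    Ctrl → ℕ → List ℕ → Ctrl → ℕ → Skel → Multiset Atom → Prop
  | nil (s j) : Beh R S k s j [] s j [] 0
  | done (s j w) : Beh R S k s j w (2, 0) j [] 0
  | cr {q γ q' u α j w s1 j1 k1 M1 s2 j2 k2 M2} : Rule.cr q γ q' u α ∈ R → j ≤ k →
      Beh R S k (0, q') j u s1 j1 k1 M1 → Beh R S k s1 j1 w s2 j2 k2 M2 →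
      Beh R S k (0, q) j (γ :: w) s2 j2 (k1 ++ k2) ((spA α (j + 1) : List Atom) + (M1 + M2))
  | intr {q γ q' u b j w s1 j1 k1 M1 s2 j2 k2 M2} : Rule.intr q γ q' u ∈ R → j ≤ k → b ∈ S →
      Beh R S k (1, b) (j + 1) u s1 j1 k1 M1 → Beh R S k s1 j1 w s2 j2 k2 M2 →
      Beh R S k (0, q) j (γ :: w) s2 j2 ((q', b) :: (k1 ++ k2)) (M1 + M2)
  | res {q γ q' j w s1 j1 k1 M1} : Rule.res q γ q' ∈ R → j ≤ k →
      Beh R S k (0, q') j (γ :: w) s1 j1 k1 M1 → Beh R S k (1, q) j (γ :: w) s1 j1 k1 M1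

section
variable {R : Set (Rule ℕ ℕ)} {S : Set ℕ} {k : ℕ}

theorem Beh.level {s j w s' j' sk M} (h : Beh R S k s j w s' j' sk M) :
    j' = j + sk.length ∧ (j ≤ k + 1 → j' ≤ k + 1) ∧ ∀ x ∈ M, j + 1 ≤ x.2 := by
  induction h with
  | nil | done => simp
  | @cr q γ q' u α j w s1 j1 k1 M1 s2 j2 k2 M2 _ hj _ _ ih1 ih2 =>
    refine ⟨by simp; omega, by omega, ?_⟩
    intro x hx
    simp only [Multiset.mem_add, Multiset.mem_coe, spA, List.mem_map] at hx
    rcases hx with ⟨a, _, rfl⟩ | hx | hx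
    · exact le_rfl
    · exact ih1.2.2 x hx
    · have := ih2.2.2 x hx; omega
  | @intr q γ q' u b j w s1 j1 k1 M1 s2 j2 k2 M2 _ hj _ _ _ ih1 ih2 =>
    refine ⟨by simp; omega, by omega, ?_⟩
    intro x hx
    simp only [Multiset.mem_add] at hx
    rcases hx with hx | hx
    · have := ih1.2.2 x hx; omega
    · have := ih2.2.2 x hx; omega
  | res _ _ _ ih => exact ih

theorem Beh.split {s j v s' j' sk M} (h : Beh R S k s j v s' j' sk M) :
    ∀ u w, v = u ++ w → ∃ s1 j1 k1 M1 k2 M2, Beh R S k s j u s1 j1 k1 M1 ∧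
      Beh R S k s1 j1 w s' j' k2 M2 ∧ sk = k1 ++ k2 ∧ M = M1 + M2 := by
  induction h with
  | nil s j =>
    intro u w h
    obtain ⟨rfl, rfl⟩ := List.append_eq_nil_iff.1 h.symm
    exact ⟨_, _, _, _, _, _, Beh.nil _ _, Beh.nil _ _, rfl, rfl⟩
  | done s j v =>
    intro u w h
    exact ⟨_, _, _, _, _, _, Beh.done _ _ _, Beh.done _ _ _, rfl, rfl⟩
  | cr hr hj h1 h2 _ ih2 =>
    intro u w h
    cases u with
    | nil =>
      simp only [List.nil_append] at h
      subst h
      exact ⟨_, _, _, _, _, _, Beh.nil _ _, Beh.cr hr hj h1 h2, rfl, by simp⟩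
    | cons x u =>
      simp only [List.cons_append, List.cons.injEq] at h
      obtain ⟨rfl, rfl⟩ := h
      obtain ⟨s1, j1, k1, M1, k2, M2, ha, hb, rfl, rfl⟩ := ih2 u w rfl
      exact ⟨_, _, _, _, _, _, Beh.cr hr hj h1 ha, hb, by simp, by simp only [add_assoc]⟩
  | intr hr hj hb h1 h2 _ ih2 =>
    intro u w h
    cases u with
    | nil =>
      simp only [List.nil_append] at h
      subst h
      exact ⟨_, _, _, _, _, _, Beh.nil _ _, Beh.intr hr hj hb h1 h2, rfl, by simp⟩
    | cons x u =>
      simp only [List.cons_append, List.cons.injEq] at h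
      obtain ⟨rfl, rfl⟩ := h
      obtain ⟨s1, j1, k1, M1, k2, M2, ha, hb', rfl, rfl⟩ := ih2 u w rfl
      exact ⟨_, _, _, _, _, _, Beh.intr hr hj hb h1 ha, hb', by simp, by simp only [add_assoc]⟩
  | res hr hj h1 ih =>
    intro u w h
    cases u with
    | nil =>
      simp only [List.nil_append] at h
      subst h
      exact ⟨_, _, _, _, _, _, Beh.nil _ _, Beh.res hr hj h1, rfl, by simp⟩
    | cons x u =>
      obtain ⟨s1, j1, k1, M1, k2, M2, ha, hb', rfl, rfl⟩ := ih (x :: u) w h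
      simp only [List.cons_append, List.cons.injEq] at h
      obtain ⟨rfl, rfl⟩ := h
      exact ⟨_, _, _, _, _, _, Beh.res hr hj ha, hb', rfl, rfl⟩

theorem Beh.join {s j u s1 j1 k1 M1} (h : Beh R S k s j u s1 j1 k1 M1) :
    ∀ {w s2 j2 k2 M2}, Beh R S k s1 j1 w s2 j2 k2 M2 → s1 ≠ (2, 0) →
      Beh R S k s j (u ++ w) s2 j2 (k1 ++ k2) (M1 + M2) := by
  induction h with
  | nil s j => intro w s2 j2 k2 M2 h _; simpa using h
  | done s j v => intro w s2 j2 k2 M2 _ h; exact absurd rfl h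
  | cr hr hj h1 _ _ ih2 =>
    intro w s2 j2 k2 M2 h hne
    have := Beh.cr hr hj h1 (ih2 h hne)
    simpa only [add_assoc, List.append_assoc, List.cons_append] using this
  | intr hr hj hb h1 _ _ ih2 =>
    intro w s2 j2 k2 M2 h hne
    have := Beh.intr hr hj hb h1 (ih2 h hne)
    simpa only [add_assoc, List.append_assoc, List.cons_append] using this
  | res hr hj _ ih =>
    intro w s2 j2 k2 M2 h hne
    exact Beh.res hr hj (ih h hne)

theorem Beh.of_done {s j w s' j' sk M} (h : Beh R S k s j w s' j' sk M) (hs : s = (2, 0)) :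
    s' = (2, 0) ∧ sk = [] ∧ M = 0 ∧ j' = j := by
  cases h <;> simp_all

/-- joining, also when the first part is abandoned -/
theorem Beh.join' {s j u s1 j1 k1 M1 w s2 j2 k2 M2} (h : Beh R S k s j u s1 j1 k1 M1)
    (h2 : Beh R S k s1 j1 w s2 j2 k2 M2) :
    Beh R S k s j (u ++ w) s2 j2 (k1 ++ k2) (M1 + M2) := by
  by_cases hne : s1 = (2, 0)
  · obtain ⟨rfl, rfl, rfl, rfl⟩ := h2.of_done hne
    clear h2
    subst hne
    generalize hs : ((2, 0) : Ctrl) = s1 at h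
    have : ∀ w, Beh R S k s j (u ++ w) s1 j2 k1 M1 := by
      induction h with
      | nil s j => intro w; rw [← hs]; exact Beh.done _ _ _
      | done s j v => intro w; exact Beh.done _ _ _
      | cr hr hj h1 _ _ ih2 => intro w; exact Beh.cr hr hj h1 (ih2 hs w)
      | intr hr hj hb h1 _ _ ih2 => intro w; exact Beh.intr hr hj hb h1 (ih2 hs w)
      | res hr hj _ ih => intro w; exact Beh.res hr hj (ih hs w)
    simpa [hs] using this w
  · exact h.join h2 hne
end

theorem Beh.exec {M : DCPS ℕ ℕ} {S : Set ℕ} {k : ℕ} {s j w s' j' sk N}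
    (h : Beh M.rules S k s j w s' j' sk N) : ∀ q, s = (0, q) →
    (sk = [] → j' = j ∧ (s' = (2, 0) ∨ ∃ q1, s' = (0, q1) ∧ (∀ x ∈ N, x.2 = j + 1) ∧
      ∀ z V, MR M k q (some (w ++ z, j)) V → MR M k q1 (some (z, j)) (N.map thr + V))) ∧
    (∀ a b sk', sk = (a, b) :: sk' → ∃ w' M1 M2, N = M1 + M2 ∧ (∀ x ∈ M1, x.2 = j + 1) ∧
      Beh M.rules S k (1, b) (j + 1) w' s' j' sk' M2 ∧
      ∀ z V, MR M k q (some (w ++ z, j)) V →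
        MR M k a none ((w' ++ z, j + 1) ::ₘ (M1.map thr + V))) := by
  induction h with
  | nil s j =>
    rintro q rfl
    refine ⟨fun _ => ⟨rfl, Or.inr ⟨q, rfl, by simp, fun z V h => by simpa using h⟩⟩, by simp⟩
  | done s j w =>
    rintro q rfl
    exact ⟨fun _ => ⟨rfl, Or.inl rfl⟩, by simp⟩
  | @cr q γ q' u α j w s1 j1 k1 M1 s2 j2 k2 M2 hr hj h1 h2 ih1 ih2 =>
    intro q0 hq0
    obtain rfl : q = q0 := by simpa using hq0
    have ih1 := ih1 q' rfl
    have hlev : ∀ x ∈ ((spA α (j + 1) : List Atom) : Multiset Atom), x.2 = j + 1 := by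
      intro x hx
      simp only [Multiset.mem_coe, spA, List.mem_map] at hx
      obtain ⟨a, _, rfl⟩ := hx
      rfl
    cases k1 with
    | nil =>
      obtain ⟨rfl, hs1⟩ := ih1.1 rfl
      rcases hs1 with rfl | ⟨q1, rfl, hl1, hrun⟩
      · obtain ⟨rfl, rfl, rfl, rfl⟩ := h2.of_done rfl
        exact ⟨fun _ => ⟨rfl, Or.inl rfl⟩, by simp⟩
      · have ih2 := ih2 q1 rfl
        constructor
        · intro hk
          obtain ⟨rfl, hs2⟩ := ih2.1 hk
          refine ⟨rfl, ?_⟩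
          rcases hs2 with rfl | ⟨q2, rfl, hl2, hrun2⟩
          · exact Or.inl rfl
          · refine Or.inr ⟨q2, rfl, ?_, fun z V hV => ?_⟩
            · intro x hx
              simp only [Multiset.mem_add] at hx
              rcases hx with hx | hx | hx
              exacts [hlev x hx, hl1 x hx, hl2 x hx]
            have := hrun2 _ _ (hrun (w ++ z) _ (by simpa using MR.cr hr hj hV))
            simpa [add_assoc, add_comm, add_left_comm] using this
        · intro a b sk' hk
          obtain ⟨w', N1, N2, rfl, hN1, hbeh, hrun2⟩ := ih2.2 a b sk' hk
          refine ⟨w', (spA α (j1 + 1) : List Atom) + (M1 + N1), N2, by simp only [add_assoc], ?_,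
            hbeh, fun z V hV => ?_⟩
          · intro x hx
            simp only [Multiset.mem_add] at hx
            rcases hx with hx | hx | hx
            exacts [hlev x hx, hl1 x hx, hN1 x hx]
          · have := hrun2 _ _ (hrun (w ++ z) _ (by simpa using MR.cr hr hj hV))
            simpa [add_assoc, add_comm, add_left_comm] using this
    | cons ab k1 =>
      refine ⟨by simp, ?_⟩
      intro a b sk' hk
      simp only [List.cons_append, List.cons.injEq] at hk
      obtain ⟨rfl, rfl⟩ := hk
      obtain ⟨w', N1, N2, rfl, hN1, hbeh, hrun⟩ := ih1.2 a b k1 rfl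
      refine ⟨w' ++ w, (spA α (j + 1) : List Atom) + N1, N2 + M2, by simp only [add_assoc], ?_,
        hbeh.join' h2, fun z V hV => ?_⟩
      · intro x hx
        simp only [Multiset.mem_add] at hx
        rcases hx with hx | hx
        exacts [hlev x hx, hN1 x hx]
      · have := hrun (w ++ z) _ (by simpa using MR.cr hr hj hV)
        simpa [add_assoc, add_comm, add_left_comm] using this
  | @intr q γ q' u b j w s1 j1 k1 M1 s2 j2 k2 M2 hr hj hb h1 h2 ih1 ih2 =>
    intro q0 hq0
    obtain rfl : q = q0 := by simpa using hq0
    refine ⟨by simp, ?_⟩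
    intro a b' sk' hk
    simp only [List.cons.injEq, Prod.mk.injEq] at hk
    obtain ⟨⟨rfl, rfl⟩, rfl⟩ := hk
    refine ⟨u ++ w, 0, M1 + M2, by simp, by simp, h1.join' h2, fun z V hV => ?_⟩
    have := MR.intr hr hj hV
    simpa using this
  | res _ _ _ _ => intro q hq; simp at hq


abbrev CrE := (ℕ × ℕ) × (ℕ × List ℕ) × Option ℕ
abbrev InE := (ℕ × ℕ) × (ℕ × List ℕ)
abbrev ReE := ℕ × ℕ × ℕ

def toCr : RuleE → Option CrE
  | .inl r => some r
  | .inr _ => none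
def toIn : RuleE → Option InE
  | .inl _ => none
  | .inr (.inl r) => some r
  | .inr (.inr _) => none
def toRe : RuleE → Option ReE
  | .inl _ => none
  | .inr (.inl _) => none
  | .inr (.inr r) => some r

def crs (x : Inst) : List CrE := x.1.filterMap toCr
def ins (x : Inst) : List InE := x.1.filterMap toIn
def res (x : Inst) : List ReE := x.1.filterMap toRe

theorem mem_crs {x : Inst} {q γ q' u α} :
    Rule.cr q γ q' u α ∈ (instDCPS x).rules ↔ ((q, γ), (q', u), α) ∈ crs x := by
  simp only [instDCPS, crs, List.mem_filterMap]
  constructor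
  · rintro ⟨e, he, h⟩
    refine ⟨e, he, ?_⟩
    rcases e with ⟨⟨_, _⟩, ⟨_, _⟩, _⟩ | ⟨⟨_, _⟩, ⟨_, _⟩⟩ | ⟨_, _, _⟩ <;>
      simp_all [decodeRule, toCr]
  · rintro ⟨e, he, h⟩
    refine ⟨e, he, ?_⟩
    rcases e with ⟨⟨_, _⟩, ⟨_, _⟩, _⟩ | ⟨⟨_, _⟩, ⟨_, _⟩⟩ | ⟨_, _, _⟩ <;>
      simp_all [decodeRule, toCr]

theorem mem_ins {x : Inst} {q γ q' u} :
    Rule.intr q γ q' u ∈ (instDCPS x).rules ↔ ((q, γ), (q', u)) ∈ ins x := by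
  simp only [instDCPS, ins, List.mem_filterMap]
  constructor
  · rintro ⟨e, he, h⟩
    refine ⟨e, he, ?_⟩
    rcases e with ⟨⟨_, _⟩, ⟨_, _⟩, _⟩ | ⟨⟨_, _⟩, ⟨_, _⟩⟩ | ⟨_, _, _⟩ <;>
      simp_all [decodeRule, toIn]
  · rintro ⟨e, he, h⟩
    refine ⟨e, he, ?_⟩
    rcases e with ⟨⟨_, _⟩, ⟨_, _⟩, _⟩ | ⟨⟨_, _⟩, ⟨_, _⟩⟩ | ⟨_, _, _⟩ <;>
      simp_all [decodeRule, toIn]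

theorem mem_res {x : Inst} {q γ q'} :
    Rule.res q γ q' ∈ (instDCPS x).rules ↔ (q, γ, q') ∈ res x := by
  simp only [instDCPS, res, List.mem_filterMap]
  constructor
  · rintro ⟨e, he, h⟩
    refine ⟨e, he, ?_⟩
    rcases e with ⟨⟨_, _⟩, ⟨_, _⟩, _⟩ | ⟨⟨_, _⟩, ⟨_, _⟩⟩ | ⟨_, _, _⟩ <;>
      simp_all [decodeRule, toRe]
  · rintro ⟨e, he, h⟩
    refine ⟨e, he, ?_⟩
    rcases e with ⟨⟨_, _⟩, ⟨_, _⟩, _⟩ | ⟨⟨_, _⟩, ⟨_, _⟩⟩ | ⟨_, _, _⟩ <;>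
      simp_all [decodeRule, toRe]

abbrev Lab := (Ctrl × ℕ × List ℕ) × (Ctrl × ℕ × Skel)
abbrev Fact := Lab × Idl Atom
abbrev Tok := ℕ × ℕ × Skel × Idl Atom
abbrev Place := Atom ⊕ Tok
instance decIdlAtom : DecidableEq (Idl Atom) := inferInstance
instance decSkel : DecidableEq Skel := inferInstance
instance decTok : DecidableEq Tok := inferInstance
instance decPlace : DecidableEq Place := inferInstance
abbrev InvE := ℕ × Idl Place
abbrev Cert := List Ctrl × List (List ℕ) × List Fact × List InvE

def lvl (j : ℕ) (l : List Atom) : List Atom := l.filter fun g => g.2 = j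

/-- post-places of the activation of a token -/
def actR (j b' : ℕ) (sk : Skel) (a : Idl Atom) : Idl Place :=
  (Sum.inr (j + 1, b', sk, a) :: (lvl (j + 1) a.1).map Sum.inl, (lvl (j + 1) a.2).map Sum.inl)

/-- the closure condition for crossing a transition -/
def fires (Inv : List InvE) (q : ℕ) (l r : Idl Place) : Prop :=
  ∃ e ∈ Inv, e.1 = q ∧ leI l (r.1 ++ e.2.1, r.2 ++ e.2.2)

structure Ok (k : ℕ) (x : Inst) (C : List Ctrl) (Ws : List (List ℕ)) (D : List Fact)
    (Inv : List InvE) : Prop where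
  done : ((2, 0) : Ctrl) ∈ C
  q0a : ((0, x.2.1.1) : Ctrl) ∈ C
  q0b : ((1, x.2.1.1) : Ctrl) ∈ C
  γ0 : [x.2.1.2] ∈ Ws
  crC : ∀ r ∈ crs x, ((0, r.2.1.1) : Ctrl) ∈ C ∧ ((1, r.2.1.1) : Ctrl) ∈ C ∧ r.2.1.2 ∈ Ws ∧
    ∀ a ∈ r.2.2.toList, [a] ∈ Ws
  inC : ∀ r ∈ ins x, ((0, r.2.1) : Ctrl) ∈ C ∧ ((1, r.2.1) : Ctrl) ∈ C ∧ r.2.2 ∈ Ws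
  reC : ∀ r ∈ res x, ((0, r.2.2) : Ctrl) ∈ C ∧ ((1, r.2.2) : Ctrl) ∈ C
  tl : ∀ w ∈ Ws, w.tail ∈ Ws
  nil : ∀ s ∈ C, ∀ j ∈ List.range (k + 2), covers D ((s, j, []), (s, j, [])) (([], []) : Idl Atom)
  don : ∀ s ∈ C, ∀ j ∈ List.range (k + 2), ∀ w ∈ Ws,
    covers D ((s, j, w), ((2, 0), j, [])) (([], []) : Idl Atom)
  cr : ∀ r ∈ crs x, ∀ f ∈ D, ∀ g ∈ D, ∀ w ∈ Ws, f.1.1.1 = (0, r.2.1.1) → f.1.1.2.2 = r.2.1.2 →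
    f.1.1.2.1 ≤ k → g.1.1.1 = f.1.2.1 → g.1.1.2.1 = f.1.2.2.1 → w = r.1.2 :: g.1.1.2.2 →
    covers D (((0, r.1.1), f.1.1.2.1, w), (g.1.2.1, g.1.2.2.1, f.1.2.2.2 ++ g.1.2.2.2))
      (spA r.2.2 (f.1.1.2.1 + 1) ++ (f.2.1 ++ g.2.1), f.2.2 ++ g.2.2)
  intr : ∀ r ∈ ins x, ∀ f ∈ D, ∀ g ∈ D, ∀ w ∈ Ws, f.1.1.1 ∈ C → f.1.1.1.1 = 1 →
    f.1.1.2.2 = r.2.2 → ∀ j ∈ List.range (k + 1),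
    f.1.1.2.1 = j + 1 → g.1.1.1 = f.1.2.1 → g.1.1.2.1 = f.1.2.2.1 → w = r.1.2 :: g.1.1.2.2 →
    covers D (((0, r.1.1), j, w),
        (g.1.2.1, g.1.2.2.1, (r.2.1, f.1.1.1.2) :: (f.1.2.2.2 ++ g.1.2.2.2)))
      (f.2.1 ++ g.2.1, f.2.2 ++ g.2.2)
  res : ∀ r ∈ res x, ∀ f ∈ D, f.1.1.1 = (0, r.2.2) → f.1.1.2.2.head? = some r.2.1 →
    f.1.1.2.1 ≤ k → covers D (((1, r.1), f.1.1.2), f.1.2) f.2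
  init : covers Inv x.2.1.1 ([Sum.inl (x.2.1.2, 0)], [])
  fin : ∀ e ∈ Inv, e.1 ∉ x.2.2
  start : ∀ e ∈ Inv, ∀ f ∈ D, f.1.1.1.1 = 1 → ∀ g ∈ f.1.1.2.2, f.1.1.2.2 = [g] →
    (Sum.inl (g, f.1.1.2.1) : Place) ∈ e.2.1 ++ e.2.2 →
    fires Inv e.1 (Sum.inr (f.1.1.2.1, f.1.1.1.2, f.1.2.2.2, f.2) :: e.2.1, e.2.2)
      ([Sum.inl (g, f.1.1.2.1)], [])
  act : ∀ e ∈ Inv, ∀ p ∈ e.2.1 ++ e.2.2, ∀ t ∈ (p.getRight?).toList, t.2.1 = e.1 →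
    ∀ ab ∈ t.2.2.1.head?.toList,
    fires Inv ab.1 ((actR t.1 ab.2 t.2.2.1.tail t.2.2.2).1 ++ e.2.1,
      (actR t.1 ab.2 t.2.2.1.tail t.2.2.2).2 ++ e.2.2) ([p], [])

section
variable {k : ℕ} {x : Inst} {C : List Ctrl} {Ws : List (List ℕ)} {D : List Fact}
    {Inv : List InvE}

def SC (C : List Ctrl) : Set ℕ := {b | ((1, b) : Ctrl) ∈ C}

theorem Ok.D_sound (h : Ok k x C Ws D Inv) {s j w s' j' sk M}
    (hb : Beh (instDCPS x).rules (SC C) k s j w s' j' sk M) : s ∈ C → j ≤ k + 1 → w ∈ Ws →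
    s' ∈ C ∧ j' ≤ k + 1 ∧ ∃ a, (((s, j, w), (s', j', sk)), a) ∈ D ∧ inI M a := by
  induction hb with
  | nil s j =>
    intro hs hj _
    refine ⟨hs, hj, ?_⟩
    obtain ⟨⟨l, a⟩, he, rfl, _⟩ := h.nil s hs j (List.mem_range.2 (by omega))
    exact ⟨a, he, inI_zero _⟩
  | done s j w =>
    intro hs hj hw
    refine ⟨h.done, hj, ?_⟩
    obtain ⟨⟨l, a⟩, he, rfl, _⟩ := h.don s hs j (List.mem_range.2 (by omega)) w hw
    exact ⟨a, he, inI_zero _⟩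
  | @cr q γ q' u α j w s1 j1 k1 M1 s2 j2 k2 M2 hr hj h1 h2 ih1 ih2 =>
    intro hs hj' hw
    rw [mem_crs] at hr
    have hC := h.crC _ hr
    obtain ⟨hs1, hj1, a1, ha1, hi1⟩ := ih1 hC.1 hj' hC.2.2.1
    obtain ⟨hs2, hj2, a2, ha2, hi2⟩ := ih2 hs1 hj1 (h.tl _ hw)
    refine ⟨hs2, hj2, ?_⟩
    obtain ⟨⟨l, a⟩, he, rfl, hle⟩ := h.cr _ hr _ ha1 _ ha2 _ hw rfl rfl hj rfl rfl rfl
    refine ⟨a, he, inI_of_leI ?_ hle⟩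
    have := inI_add (inI_coe (spA α (j + 1), [])) (inI_add hi1 hi2)
    simpa using this
  | @intr q γ q' u b j w s1 j1 k1 M1 s2 j2 k2 M2 hr hj hb h1 h2 ih1 ih2 =>
    intro hs hj' hw
    rw [mem_ins] at hr
    have hC := h.inC _ hr
    obtain ⟨hs1, hj1, a1, ha1, hi1⟩ := ih1 hb (by omega) hC.2.2
    obtain ⟨hs2, hj2, a2, ha2, hi2⟩ := ih2 hs1 hj1 (h.tl _ hw)
    refine ⟨hs2, hj2, ?_⟩
    obtain ⟨⟨l, a⟩, he, rfl, hle⟩ := h.intr _ hr _ ha1 _ ha2 _ hw hb rfl rfl j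
      (List.mem_range.2 (by omega)) rfl rfl rfl rfl
    exact ⟨a, he, inI_of_leI (inI_add hi1 hi2) hle⟩
  | @res q γ q' j w s1 j1 k1 M1 hr hj h1 ih1 =>
    intro hs hj' hw
    rw [mem_res] at hr
    have hC := h.reC _ hr
    obtain ⟨hs1, hj1, a1, ha1, hi1⟩ := ih1 hC.1 hj' hw
    refine ⟨hs1, hj1, ?_⟩
    obtain ⟨⟨l, a⟩, he, rfl, hle⟩ := h.res _ hr _ ha1 rfl rfl hj
    exact ⟨a, he, inI_of_leI hi1 hle⟩

abbrev Rho := ℕ × ℕ × Skel × Multiset Atom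

def Asg (k : ℕ) (x : Inst) (C : List Ctrl) (t : List ℕ × ℕ) (ρ : Rho) : Prop :=
  ρ.1 = t.2 ∧ ρ.2.1 ∈ SC C ∧
    ∃ s' j', Beh (instDCPS x).rules (SC C) k (1, ρ.2.1) t.2 t.1 s' j' ρ.2.2.1 ρ.2.2.2

def LeP (ρ : Rho) (p : Place) : Prop :=
  ∃ a, p = Sum.inr (ρ.1, ρ.2.1, ρ.2.2.1, a) ∧ inI ρ.2.2.2 a

def InInv (Inv : List InvE) (q : ℕ) (P : Multiset Place) : Prop := ∃ a, (q, a) ∈ Inv ∧ inI P a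

theorem InInv.mono {q} {P P' : Multiset Place} (h : InInv Inv q P) (hP : P' ≤ P) :
    InInv Inv q P' := by
  obtain ⟨a, h1, h2⟩ := h
  exact ⟨a, h1, h2.mono hP⟩

theorem mem_of_inI {β : Type} [DecidableEq β] {p : β} {m : Multiset β} {a : Idl β}
    (h : inI (p ::ₘ m) a) : p ∈ a.1 ++ a.2 := by
  by_contra hp
  simp only [List.mem_append, not_or] at hp
  have := h p hp.2
  rw [List.count_eq_zero_of_not_mem hp.1] at this
  simp at this

theorem Ok.start_sound (h : Ok k x C Ws D Inv) {q γ j P ρ} (hI : InInv Inv q (Sum.inl (γ, j) ::ₘ P))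
    (hw : [γ] ∈ Ws) (hj : j ≤ k + 1) (hA : Asg k x C ([γ], j) ρ) :
    ∃ p, LeP ρ p ∧ InInv Inv q (p ::ₘ P) := by
  obtain ⟨a, ha, hi⟩ := hI
  obtain ⟨j0, b, sk, M⟩ := ρ
  obtain ⟨rfl, hb, s', j', hbeh⟩ := hA
  obtain ⟨_, _, d, hd, hM⟩ := h.D_sound hbeh hb hj hw
  obtain ⟨⟨q', a'⟩, he, rfl, hle⟩ := h.start _ ha _ hd rfl γ (by simp) rfl (mem_of_inI hi)
  refine ⟨Sum.inr (j0, b, sk, d), ⟨d, rfl, hM⟩, a', he, ?_⟩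
  have := fire_sound (s := {Sum.inr (j0, b, sk, d)}) (r := ([Sum.inr (j0, b, sk, d)], [])) hi
    (inI_coe _) hle
  simpa using this

theorem inI_lvl {M : Multiset Atom} {a : Idl Atom} (h : inI M a) (j : ℕ) :
    inI ((M.filter fun g => g.2 = j).map (Sum.inl : Atom → Place))
      ((lvl j a.1).map Sum.inl, (lvl j a.2).map Sum.inl) := by
  intro p hp
  rcases p with g | t
  · rw [← Multiset.coe_count, ← Multiset.map_coe,
      Multiset.count_map_eq_count' _ _ Sum.inl_injective,
      Multiset.count_map_eq_count' _ _ Sum.inl_injective, Multiset.coe_count]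
    simp only [List.mem_map, lvl, List.mem_filter, Sum.inl.injEq, exists_eq_right,
      decide_eq_true_eq, not_and] at hp
    by_cases hg : g.2 = j
    · have := h g (fun h' => hp h' hg)
      rw [Multiset.count_filter, if_pos hg, lvl, ← Multiset.coe_count, ← Multiset.filter_coe,
        Multiset.count_filter, if_pos hg, Multiset.coe_count]
      exact this
    · rw [Multiset.count_filter, if_neg hg]; exact Nat.zero_le _
  · rw [Multiset.count_eq_zero_of_notMem (by simp)]; exact Nat.zero_le _

theorem Ok.act_sound (h : Ok k x C Ws D Inv) {q j a b' sk M p P} (hI : InInv Inv q (p ::ₘ P))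
    (hp : LeP (j, q, (a, b') :: sk, M) p) : ∃ p', LeP (j + 1, b', sk, M) p' ∧
      InInv Inv a (p' ::ₘ ((M.filter fun g => g.2 = j + 1).map Sum.inl + P)) := by
  obtain ⟨e, ha, hi⟩ := hI
  obtain ⟨d, rfl, hd⟩ := hp
  obtain ⟨⟨q', a'⟩, he, rfl, hle⟩ := h.act _ ha _ (mem_of_inI hi) (j, q, (a, b') :: sk, d) (by simp)
    rfl (a, b') (by simp)
  refine ⟨_, ⟨d, rfl, hd⟩, a', he, ?_⟩
  have hs : inI (Sum.inr (j + 1, b', sk, d) ::ₘ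
      ((M.filter fun g => g.2 = j + 1).map (Sum.inl : Atom → Place))) (actR j b' sk d) := by
    have := inI_add (inI_coe (([Sum.inr (j + 1, b', sk, d)], []) : Idl Place)) (inI_lvl hd (j + 1))
    simpa [actR] using this
  have := fire_sound hi hs hle
  simpa using this

def GoodO (k : ℕ) (x : Inst) (C : List Ctrl) (Inv : List InvE) (q : ℕ)
    (act : Option (List ℕ × ℕ)) (V : Multiset (List ℕ × ℕ)) : Prop :=
  match act with
  | none => q ∈ SC C ∧ ∀ Cc, Multiset.Rel (Asg k x C) V Cc →
      ∃ P, Multiset.Rel LeP Cc P ∧ InInv Inv q P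
  | some (w, i) => ∀ s' j' a b sk M,
      Beh (instDCPS x).rules (SC C) k (0, q) i w s' j' ((a, b) :: sk) M →
      ∀ Cc, Multiset.Rel (Asg k x C) V Cc →
      ∃ P p, Multiset.Rel LeP Cc P ∧ LeP (i + 1, b, sk, M) p ∧
        InInv Inv a (p ::ₘ ((M.filter fun g => g.2 = i + 1).map Sum.inl + P))

theorem Ok.good (h : Ok k x C Ws D Inv) {q act V} (hr : MR (instDCPS x) k q act V) :
    GoodO k x C Inv q act V := by
  induction hr with
  | init =>
    refine ⟨h.q0b, fun Cc hCc => ?_⟩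
    rw [← Multiset.cons_zero, Multiset.rel_cons_left] at hCc
    obtain ⟨ρ, Cc', hρ, h0, rfl⟩ := hCc
    rw [Multiset.rel_zero_left] at h0
    subst h0
    have hI : InInv Inv x.2.1.1 (Sum.inl (x.2.1.2, 0) ::ₘ 0) := by
      obtain ⟨⟨q, a⟩, he, rfl, hle⟩ := h.init
      exact ⟨a, he, inI_of_leI (inI_coe ([Sum.inl (x.2.1.2, 0)], [])) hle⟩
    obtain ⟨p, hp, hI'⟩ := h.start_sound hI h.γ0 (by omega) hρ
    exact ⟨_, Multiset.rel_cons_left.2 ⟨p, 0, hp, Multiset.rel_zero_left.2 rfl, rfl⟩, hI'⟩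
  | @cr q γ q' u α w i V hr hi _ ih =>
    intro s' j' a b sk M hb Cc hCc
    obtain ⟨s1, j1, k1, M1, k2, M2, h1, h2, hk, rfl⟩ := hb.split u w rfl
    have hb' := Beh.cr hr hi h1 h2
    rw [← hk] at hb'
    rw [Multiset.rel_add_left] at hCc
    obtain ⟨Cs, Cv, hCs, hCv, rfl⟩ := hCc
    obtain ⟨P, p, hP, hp, hI⟩ := ih _ _ _ _ _ _ hb' _ hCv
    have hp' : LeP (i + 1, b, sk, M1 + M2) p := by
      obtain ⟨d, rfl, hd⟩ := hp
      exact ⟨d, rfl, hd.mono (Multiset.le_add_left _ _)⟩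
    rw [mem_crs] at hr
    cases α with
    | none =>
      simp only [spA, Option.toList_none, List.map_nil, Multiset.coe_nil, Multiset.map_zero,
        Multiset.rel_zero_left, zero_add] at hCs hI
      subst hCs
      exact ⟨P, p, by simpa using hP, hp', hI⟩
    | some a0 =>
      simp only [spA, Option.toList_some, List.map_cons, List.map_nil, Multiset.coe_singleton,
        Multiset.map_singleton] at hCs hI
      rw [← Multiset.cons_zero, Multiset.rel_cons_left] at hCs
      obtain ⟨ρ, Cc', hρ, h0, rfl⟩ := hCs
      rw [Multiset.rel_zero_left] at h0
      subst h0
      have hI2 : InInv Inv a (Sum.inl (a0, i + 1) ::ₘ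
          (p ::ₘ (((M1 + M2).filter fun g => g.2 = i + 1).map Sum.inl + P))) := by
        rw [Multiset.cons_swap]
        simpa [Multiset.filter_add, Multiset.filter_singleton] using hI
      obtain ⟨p0, hp0, hI3⟩ := h.start_sound hI2 ((h.crC _ hr).2.2.2 a0 (by simp)) (by omega) hρ
      refine ⟨p0 ::ₘ P, p, ?_, hp', ?_⟩
      · rw [Multiset.cons_add, zero_add]
        exact Multiset.rel_cons_left.2 ⟨p0, P, hp0, hP, rfl⟩
      · rw [Multiset.add_cons, Multiset.cons_swap]
        exact hI3
  | @intr q γ q' u w i V hr hi _ ih =>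
    refine ⟨(h.inC _ (mem_ins.1 hr)).2.1, fun Cc hCc => ?_⟩
    rw [Multiset.rel_cons_left] at hCc
    obtain ⟨⟨j0, b, sk, M⟩, Cv, ⟨rfl, hbS, s', j', hb⟩, hCv, rfl⟩ := hCc
    obtain ⟨s1, j1, k1, M1, k2, M2, h1, h2, hk, hM⟩ := hb.split u w rfl
    simp only at hk hM
    have hb' := Beh.intr hr hi hbS h1 h2
    rw [← hk, ← hM] at hb'
    obtain ⟨P, p, hP, hp, hI⟩ := ih _ _ _ _ _ _ hb' _ hCv
    exact ⟨p ::ₘ P, Multiset.rel_cons_left.2 ⟨p, P, hp, hP, rfl⟩,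
      hI.mono (Multiset.cons_le_cons _ (Multiset.le_add_left _ _))⟩
  | @res q γ q' w i V hr hi _ ih =>
    intro s' j' a b sk M hb Cc hCc
    have hb' := Beh.res hr hi hb
    obtain ⟨P, hP, hI⟩ := ih.2 ((i, q, (a, b) :: sk, M) ::ₘ Cc)
      (Multiset.rel_cons_left.2 ⟨_, Cc, ⟨rfl, ih.1, s', j', hb'⟩, hCc, rfl⟩)
    rw [Multiset.rel_cons_left] at hP
    obtain ⟨p, P', hp, hP', rfl⟩ := hP
    obtain ⟨p', hp', hI'⟩ := h.act_sound hI hp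
    exact ⟨P', p', hP', hp', hI'⟩

theorem Ok.sound (h : Ok k x C Ws D Inv) :
    ¬ ∃ q ∈ x.2.2, KBoundedReachable (instDCPS x) k q := by
  rintro ⟨q, hq, hr⟩
  rw [kbr_iff] at hr
  obtain ⟨V, hV⟩ := hr
  have hg := h.good hV
  obtain ⟨P, _, a, ha, _⟩ := hg.2 (V.map fun t => (t.2, q, [], 0)) (by
    rw [Multiset.rel_map_right]
    exact Multiset.rel_refl_of_refl_on fun t _ => ⟨rfl, hg.1, _, _, Beh.done _ _ _⟩)
  exact h.fin _ ha hq
end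

def sts (x : Inst) : List ℕ := x.2.1.1 :: ((crs x).flatMap (fun r => [r.1.1, r.2.1.1]) ++
  ((ins x).flatMap (fun r => [r.1.1, r.2.1]) ++ (res x).flatMap (fun r => [r.1, r.2.2])))
def ctl (x : Inst) : List Ctrl := (2, 0) :: (sts x).flatMap (fun q => [(0, q), (1, q)])
def bwds (x : Inst) : List (List ℕ) := [] :: [x.2.1.2] :: ((crs x).map (fun r => r.2.1.2) ++
  ((crs x).flatMap (fun r => r.2.2.toList.map fun a => [a]) ++ (ins x).map (fun r => r.2.2)))
def wds (x : Inst) : List (List ℕ) := (bwds x).flatMap List.tails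
def als (x : Inst) : List ℕ := (crs x).flatMap (fun r => r.2.2.toList)
def atm (k : ℕ) (x : Inst) : Finset Atom := (als x).toFinset ×ˢ Finset.range (k + 2)

theorem mem_ctl0 {x : Inst} {q : ℕ} : ((0, q) : Ctrl) ∈ ctl x ↔ q ∈ sts x := by simp [ctl]
theorem mem_ctl1 {x : Inst} {q : ℕ} : ((1, q) : Ctrl) ∈ ctl x ↔ q ∈ sts x := by simp [ctl]

theorem mem_SC {x : Inst} {q : ℕ} : q ∈ SC (ctl x) ↔ q ∈ sts x := mem_ctl1

theorem crs_sts {x : Inst} {r} (h : r ∈ crs x) : r.1.1 ∈ sts x ∧ r.2.1.1 ∈ sts x := by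
  simp only [sts, List.mem_cons, List.mem_append, List.mem_flatMap]
  exact ⟨Or.inr (Or.inl ⟨r, h, by simp⟩), Or.inr (Or.inl ⟨r, h, by simp⟩)⟩
theorem ins_sts {x : Inst} {r} (h : r ∈ ins x) : r.1.1 ∈ sts x ∧ r.2.1 ∈ sts x := by
  simp only [sts, List.mem_cons, List.mem_append, List.mem_flatMap]
  exact ⟨Or.inr (Or.inr (Or.inl ⟨r, h, by simp⟩)), Or.inr (Or.inr (Or.inl ⟨r, h, by simp⟩))⟩
theorem res_sts {x : Inst} {r} (h : r ∈ res x) : r.1 ∈ sts x ∧ r.2.2 ∈ sts x := by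
  simp only [sts, List.mem_cons, List.mem_append, List.mem_flatMap]
  exact ⟨Or.inr (Or.inr (Or.inr ⟨r, h, by simp⟩)), Or.inr (Or.inr (Or.inr ⟨r, h, by simp⟩))⟩

theorem wds_of_bwds {x : Inst} {w} (h : w ∈ bwds x) : w ∈ wds x := by
  simp only [wds, List.mem_flatMap, List.mem_tails]
  exact ⟨w, h, List.suffix_refl _⟩

theorem spA_atm {k : ℕ} {x : Inst} {r : CrE} (h : r ∈ crs x) {j : ℕ} (hj : j ≤ k) :
    ∀ g ∈ spA r.2.2 (j + 1), g ∈ atm k x := by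
  intro g hg
  simp only [spA, List.mem_map] at hg
  obtain ⟨a, ha, rfl⟩ := hg
  simp only [atm, Finset.mem_product, List.mem_toFinset, Finset.mem_range, als, List.mem_flatMap]
  exact ⟨⟨r, h, ha⟩, by omega⟩

theorem Beh.lab {k : ℕ} {x : Inst} {s j w s' j' sk M}
    (hb : Beh (instDCPS x).rules (SC (ctl x)) k s j w s' j' sk M) : s ∈ ctl x → 
    s' ∈ ctl x ∧ (∀ ab ∈ sk, ab.1 ∈ sts x ∧ ab.2 ∈ sts x) ∧ ∀ g ∈ M, g ∈ atm k x := by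
  induction hb with
  | nil s j => intro h; simp [h]
  | done s j w => intro h; simp [ctl]
  | @cr q γ q' u α j w s1 j1 k1 M1 s2 j2 k2 M2 hr hj h1 h2 ih1 ih2 =>
    intro hs
    rw [mem_crs] at hr
    obtain ⟨a1, a2, a3⟩ := ih1 (mem_ctl0.2 (crs_sts hr).2)
    obtain ⟨b1, b2, b3⟩ := ih2 a1
    refine ⟨b1, ?_, ?_⟩
    · intro ab hab
      rcases List.mem_append.1 hab with h | h
      exacts [a2 _ h, b2 _ h]
    · intro g hg
      simp only [Multiset.mem_add, Multiset.mem_coe] at hg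
      rcases hg with h | h | h
      exacts [spA_atm hr hj g h, a3 _ h, b3 _ h]
  | @intr q γ q' u b j w s1 j1 k1 M1 s2 j2 k2 M2 hr hj hb h1 h2 ih1 ih2 =>
    intro hs
    rw [mem_ins] at hr
    obtain ⟨a1, a2, a3⟩ := ih1 hb
    obtain ⟨b1, b2, b3⟩ := ih2 a1
    refine ⟨b1, ?_, ?_⟩
    · intro ab hab
      simp only [List.mem_cons, List.mem_append] at hab
      rcases hab with rfl | h | h
      exacts [⟨(ins_sts hr).2, mem_SC.1 hb⟩, a2 _ h, b2 _ h]
    · intro g hg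
      simp only [Multiset.mem_add] at hg
      rcases hg with h | h
      exacts [a3 _ h, b3 _ h]
  | @res q γ q' j w s1 j1 k1 M1 hr hj h1 ih1 =>
    intro hs
    rw [mem_res] at hr
    exact ih1 (mem_ctl0.2 (res_sts hr).2)

theorem exists_skels (T : Finset (ℕ × ℕ)) (n : ℕ) :
    ∃ F : Finset Skel, ∀ l, l ∈ F ↔ l.length ≤ n ∧ ∀ a ∈ l, a ∈ T := by
  induction n with
  | zero => 
    refine ⟨{[]}, fun l => ?_⟩
    cases l <;> simp
  | succ n ih =>
    obtain ⟨F, hF⟩ := ih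
    refine ⟨insert [] ((T ×ˢ F).image (fun z => z.1 :: z.2)), fun l => ?_⟩
    cases l with
    | nil => simp
    | cons a l =>
      simp only [Finset.mem_insert, Finset.mem_image, Finset.mem_product, reduceCtorEq, false_or,
        List.cons.injEq, Prod.exists, List.length_cons, List.mem_cons, forall_eq_or_imp]
      constructor
      · rintro ⟨a1, a2, l', ⟨h1, h2⟩, h3, rfl⟩
        subst h3
        have := (hF _).1 h2
        exact ⟨by omega, h1, this.2⟩
      · rintro ⟨h1, h2, h3⟩
        exact ⟨a.1, a.2, l, ⟨h2, (hF _).2 ⟨by omega, h3⟩⟩, rfl, rfl⟩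

/-- the behaviour predicate for labels -/
def XB (k : ℕ) (x : Inst) (l : Lab) (m : Multiset Atom) : Prop :=
  ∃ M, m ≤ M ∧ Beh (instDCPS x).rules (SC (ctl x)) k l.1.1 l.1.2.1 l.1.2.2 l.2.1 l.2.2.1 l.2.2.2 M

abbrev CT := Atom ⊕ Rho

def Conc : Place → CT → Prop
  | .inl g, .inl g' => g = g'
  | .inr t, .inr ρ => t.1 = ρ.1 ∧ t.2.1 = ρ.2.1 ∧ t.2.2.1 = ρ.2.2.1 ∧ inI ρ.2.2.2 t.2.2.2
  | _, _ => False

def Real (k : ℕ) (x : Inst) : CT → List ℕ × ℕ → Prop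
  | .inl g, t => t = thr g
  | .inr ρ, t => t.2 = ρ.1 ∧ ∃ s' j' M', ρ.2.2.2.filter (fun g => ρ.1 < g.2) ≤ M' ∧
      Beh (instDCPS x).rules (SC (ctl x)) k (1, ρ.2.1) ρ.1 t.1 s' j' ρ.2.2.1 M'

def Cov (k : ℕ) (x : Inst) (q : ℕ) (Cc : Multiset CT) : Prop :=
  ∃ V V', MR (instDCPS x) k q none (V + V') ∧ Multiset.Rel (Real k x) Cc V

def XI (k : ℕ) (x : Inst) (q : ℕ) (m : Multiset Place) : Prop :=
  ∀ Cc, Multiset.Rel Conc m Cc → Cov k x q Cc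

theorem XB.mono {k x l m m'} (hm : m' ≤ m) (h : XB k x l m) : XB k x l m' := by
  obtain ⟨M, h1, h2⟩ := h
  exact ⟨M, hm.trans h1, h2⟩

theorem XI.mono {k x q} {m m' : Multiset Place} (hm : m' ≤ m) (h : XI k x q m) : XI k x q m' := by
  obtain ⟨n, rfl⟩ := Multiset.le_iff_exists_add.1 hm
  intro Cc hCc
  have hn : Multiset.Rel Conc n (n.map (Sum.map id fun t => (t.1, t.2.1, t.2.2.1, 0))) := by
    rw [Multiset.rel_map_right]
    refine Multiset.rel_refl_of_refl_on fun t _ => ?_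
    rcases t with g | t
    · rfl
    · exact ⟨rfl, rfl, rfl, inI_zero _⟩
  obtain ⟨V, V', hV, hR⟩ := h _ (hCc.add hn)
  rw [Multiset.rel_add_left] at hR
  obtain ⟨V1, V2, h1, h2, rfl⟩ := hR
  exact ⟨V1, V2 + V', by rwa [← add_assoc], h1⟩

theorem inI_nil_iff {β : Type} [DecidableEq β] {m : Multiset β} {l : List β} :
    inI m (l, []) ↔ m ≤ (l : Multiset β) := by
  rw [Multiset.le_iff_count]
  simp [inI]

theorem XI.init (k : ℕ) (x : Inst) (m) (h : inI m (([Sum.inl (x.2.1.2, 0)], []) : Idl Place)) :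
    XI k x x.2.1.1 m := by
  rw [inI_nil_iff] at h
  refine XI.mono h ?_
  intro Cc hCc
  rw [Multiset.coe_singleton, ← Multiset.cons_zero, Multiset.rel_cons_left] at hCc
  obtain ⟨c, Cc', hc, h0, rfl⟩ := hCc
  rw [Multiset.rel_zero_left] at h0
  subst h0
  rcases c with g | ρ
  · obtain rfl : (x.2.1.2, 0) = g := hc
    exact ⟨{([x.2.1.2], 0)}, 0, by rw [add_zero]; exact MR.init,
      Multiset.rel_cons_left.2 ⟨_, 0, rfl, Multiset.rel_zero_left.2 rfl, rfl⟩⟩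
  · exact hc.elim

theorem XI.zero {k : ℕ} {x : Inst} {q} (h : XI k x q 0) : KBoundedReachable (instDCPS x) k q := by
  obtain ⟨V, V', hV, _⟩ := h 0 (Multiset.rel_zero_left.2 rfl)
  exact (kbr_iff _ _ _).2 ⟨_, hV⟩

theorem XI.start {k : ℕ} {x : Inst} {q : ℕ} {g j b s' j' sk} {d : Idl Atom} 
    (hd : ∀ m, inI m d → XB k x (((1, b), j, [g]), (s', j', sk)) m) (m0 s : Multiset Place)
    (h : XI k x q (Sum.inl (g, j) ::ₘ m0)) (hs : inI s ([Sum.inr (j, b, sk, d)], [])) :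
    XI k x q (s + m0) := by
  rw [inI_nil_iff] at hs
  refine XI.mono (add_le_add_left hs m0) ?_
  intro Cc hCc
  rw [Multiset.coe_singleton, Multiset.singleton_add, Multiset.rel_cons_left] at hCc
  obtain ⟨c, Cc', hc, h0, rfl⟩ := hCc
  rcases c with g' | ⟨j1, b1, sk1, M⟩
  · exact hc.elim
  · obtain ⟨rfl, rfl, rfl, hM⟩ := hc
    obtain ⟨V, V', hV, hR⟩ := h (Sum.inl (g, j) ::ₘ Cc')
      (Multiset.rel_cons_left.2 ⟨Sum.inl (g, j), Cc', rfl, h0, rfl⟩)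
    refine ⟨V, V', hV, ?_⟩
    rw [Multiset.rel_cons_left] at hR ⊢
    obtain ⟨t, V0, rfl, h1, rfl⟩ := hR
    refine ⟨_, V0, ⟨rfl, ?_⟩, h1, rfl⟩
    obtain ⟨M', hM', hb⟩ := hd M hM
    exact ⟨s', j', M', (Multiset.filter_le _ _).trans hM', hb⟩

theorem inI_lvl' {s : Multiset Place} {d : Idl Atom} {j : ℕ}
    (h : inI s ((lvl j d.1).map Sum.inl, (lvl j d.2).map Sum.inl)) :
    ∃ N : Multiset Atom, s = N.map Sum.inl ∧ inI N d ∧ ∀ g ∈ N, g.2 = j := by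
  have hmem : ∀ p ∈ s, ∃ g : Atom, p = Sum.inl g ∧ g.2 = j := by
    intro p hp
    obtain ⟨s', rfl⟩ := Multiset.exists_cons_of_mem hp
    have := mem_of_inI h
    simp only [List.mem_append, List.mem_map, lvl, List.mem_filter, decide_eq_true_eq] at this
    rcases this with ⟨g, hg, rfl⟩ | ⟨g, hg, rfl⟩
    exacts [⟨g, rfl, hg.2⟩, ⟨g, rfl, hg.2⟩]
  obtain ⟨N, rfl⟩ : ∃ N : Multiset Atom, s = N.map Sum.inl := by
    clear h
    induction s using Multiset.induction with
    | empty => exact ⟨0, rfl⟩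
    | cons p s ih =>
      obtain ⟨g, rfl, _⟩ := hmem p (by simp)
      obtain ⟨N, rfl⟩ := ih fun p hp => hmem p (by simp [hp])
      exact ⟨g ::ₘ N, by simp⟩
  have hlev : ∀ g ∈ N, g.2 = j := by
    intro g hg
    obtain ⟨g', h1, h2⟩ := hmem (Sum.inl g) (by simpa using hg)
    obtain rfl := Sum.inl_injective h1
    exact h2
  refine ⟨N, rfl, ?_, hlev⟩
  intro g hg
  by_cases hgN : g ∈ N
  · have := h (Sum.inl g) (by simp [lvl, hg])
    rw [← Multiset.coe_count, ← Multiset.map_coe,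
      Multiset.count_map_eq_count' _ _ Sum.inl_injective,
      Multiset.count_map_eq_count' _ _ Sum.inl_injective] at this
    refine this.trans ?_
    rw [← Multiset.coe_count]
    refine Multiset.count_le_of_le _ ?_
    rw [lvl, ← Multiset.filter_coe]
    exact Multiset.filter_le _ _
  · rw [Multiset.count_eq_zero_of_notMem hgN]; exact Nat.zero_le _

theorem XI.act {k : ℕ} {x : Inst} {q a : ℕ} {j b' sk} {d : Idl Atom} (m0 s : Multiset Place)
    (h : XI k x q (Sum.inr (j, q, (a, b') :: sk, d) ::ₘ m0)) (hs : inI s (actR j b' sk d)) :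
    XI k x a (s + m0) := by
  obtain ⟨s1, s2, hs1, hs2, hs⟩ := inI_split (a := ([Sum.inr (j + 1, b', sk, d)], []))
    (b := ((lvl (j + 1) d.1).map Sum.inl, (lvl (j + 1) d.2).map Sum.inl)) hs
  rw [inI_nil_iff] at hs1
  obtain ⟨N, rfl, hN, hNl⟩ := inI_lvl' hs2
  refine XI.mono (add_le_add_left (hs.trans (add_le_add_left hs1 _)) m0) ?_
  intro Cc hCc
  rw [Multiset.coe_singleton, Multiset.singleton_add, Multiset.cons_add,
    Multiset.rel_cons_left] at hCc
  obtain ⟨c, Cc', hc, h0, rfl⟩ := hCc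
  rw [Multiset.rel_add_left] at h0
  obtain ⟨CN, C0, hCN, hC0, rfl⟩ := h0
  obtain rfl : CN = N.map Sum.inl := by
    rw [Multiset.rel_map_left] at hCN
    have : Multiset.Rel (fun (g : Atom) (c : CT) => Sum.inl g = c) N CN := by
      refine hCN.mono fun g _ c _ hgc => ?_
      rcases c with g' | ρ
      · exact congrArg Sum.inl hgc
      · exact hgc.elim
    rw [← Multiset.rel_eq, Multiset.rel_map_right, Multiset.rel_flip.symm]
    exact this.mono fun g _ c _ hgc => hgc.symm
  rcases c with g' | ⟨j1, b1, sk1, M'⟩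
  · exact hc.elim
  obtain ⟨rfl, rfl, rfl, hM'⟩ := hc
  simp only at hM'
  have hM : inI (N + M'.filter fun g => j + 1 < g.2) d := by
    intro g hg
    have h1 := hN g hg
    have h2 := hM' g hg
    rw [Multiset.count_add, Multiset.count_filter]
    by_cases hgj : j + 1 < g.2
    · rw [Multiset.count_eq_zero_of_notMem (fun hgN => by have := hNl g hgN; omega), if_pos hgj]
      omega
    · rw [if_neg hgj]; omega
  have hcc : Conc (Sum.inr (j, q, (a, b') :: sk, d))
      (Sum.inr (j, q, (a, b') :: sk, N + M'.filter fun g => j + 1 < g.2)) := ⟨rfl, rfl, rfl, hM⟩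
  obtain ⟨V, V', hV, hR⟩ := h _ (Multiset.rel_cons_left.2 ⟨_, C0, hcc, hC0, rfl⟩)
  rw [Multiset.rel_cons_left] at hR
  obtain ⟨⟨w, j1⟩, V0, ⟨hj1, s', j', M'', hle, hb⟩, hR0, rfl⟩ := hR
  simp only at hj1 hle hb
  subst hj1
  cases hb with
  | @res _ γ q' _ w _ _ _ _ hr hj hb =>
  have hMR := MR.res hr hj (by rw [Multiset.cons_add] at hV; exact hV)
  obtain ⟨w2, M1, M2, rfl, hM1, hb2, hrun⟩ := (hb.exec q' rfl).2 a b' sk rfl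
  have hfin := hrun [] _ (by simpa using hMR)
  have hlev := hb2.level.2.2
  have hN1 : N ≤ M1 := by
    rw [Multiset.le_iff_count]
    intro g
    by_cases hgN : g ∈ N
    · have := Multiset.count_le_of_le g hle
      have hg := hNl g hgN
      rw [Multiset.count_filter, if_pos (by omega), Multiset.count_add, Multiset.count_add,
        Multiset.count_eq_zero_of_notMem (s := M2) (fun h => by have := hlev g h; omega)] at this
      omega
    · rw [Multiset.count_eq_zero_of_notMem hgN]; exact Nat.zero_le _
  have hN2 : M'.filter (fun g => j1 + 1 < g.2) ≤ M2 := by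
    rw [Multiset.le_iff_count]
    intro g
    by_cases hgj : j1 + 1 < g.2
    · have := Multiset.count_le_of_le g hle
      rw [Multiset.count_filter, if_pos (by omega), Multiset.count_add, Multiset.count_add,
        Multiset.count_eq_zero_of_notMem (s := M1) (fun h => by have := hM1 g h; omega)] at this
      omega
    · rw [Multiset.count_filter, if_neg hgj]; exact Nat.zero_le _
  obtain ⟨N', rfl⟩ := Multiset.le_iff_exists_add.1 hN1
  refine ⟨(w2, j1 + 1) ::ₘ (N.map thr + V0), N'.map thr + V', ?_, ?_⟩
  · rw [List.append_nil] at hfin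
    convert hfin using 1
    rw [Multiset.cons_add, Multiset.map_add]
    congr 1
    abel
  · refine Multiset.rel_cons_left.2 ⟨_, _, ⟨rfl, s', j', M2, hN2, hb2⟩, ?_, rfl⟩
    refine Multiset.Rel.add ?_ hR0
    rw [Multiset.rel_map_left, Multiset.rel_map_right]
    exact Multiset.rel_refl_of_refl_on fun t _ => rfl


theorem mem_of_erase {β : Type} [DecidableEq β] {l : List β} {a b : β} (h : a ∈ l.erase b) :
    a ∈ l := List.mem_of_mem_erase h

theorem exists_of_head {β : Type} {l : List β} {a : β} (h : a ∈ l.head?.toList) :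
    ∃ t, l = a :: t := by
  cases l with
  | nil => simp at h
  | cons b t => 
    obtain rfl : a = b := by simpa using h
    exact ⟨t, rfl⟩

theorem eq_inr_of_getRight {β γ : Type} {p : β ⊕ γ} {t : γ} (h : t ∈ p.getRight?.toList) :
    p = Sum.inr t := by
  rcases p with g | t'
  · simp at h
  · obtain rfl : t = t' := by simpa using h
    rfl

theorem complete (k : ℕ) (x : Inst) (hF : ¬ ∃ q ∈ x.2.2, KBoundedReachable (instDCPS x) k q) :
    ∃ C Ws D Inv, Ok k x C Ws D Inv := by
  classical
  obtain ⟨Sk, hSk⟩ := exists_skels ((sts x).toFinset ×ˢ (sts x).toFinset) (k + 1)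
  let L : Finset Lab := ((ctl x).toFinset ×ˢ Finset.range (k + 2) ×ˢ (wds x).toFinset) ×ˢ
    ((ctl x).toFinset ×ˢ Finset.range (k + 2) ×ˢ Sk)
  obtain ⟨D, hD1, hD2⟩ := decomp L (atm k x) (XB k x) (fun l m m' h => XB.mono h)
  have hL : ∀ l : Lab, l ∈ L ↔ (l.1.1 ∈ ctl x ∧ l.1.2.1 ≤ k + 1 ∧ l.1.2.2 ∈ wds x) ∧
      (l.2.1 ∈ ctl x ∧ l.2.2.1 ≤ k + 1 ∧ l.2.2.2 ∈ Sk) := by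
    intro l
    simp only [L, Finset.mem_product, List.mem_toFinset, Finset.mem_range]
    grind
  have hlab : ∀ s j w s' j' sk m, XB k x ((s, j, w), (s', j', sk)) m → s ∈ ctl x → j ≤ k + 1 →
      w ∈ wds x → ((s, j, w), (s', j', sk)) ∈ L := by
    rintro s j w s' j' sk m ⟨M, _, hb⟩ hs hj hw
    have h1 := hb.lab hs
    have h2 := hb.level
    simp only at h1 h2
    rw [hL]
    refine ⟨⟨hs, hj, hw⟩, h1.1, h2.2.1 hj, (hSk _).2 ⟨?_, ?_⟩⟩
    · have := h2.2.1 hj; simp only at *; omega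
    · intro ab hab
      simpa using h1.2.1 ab hab
  have hcov : ∀ s j w s' j' sk (a : Idl Atom), s ∈ ctl x → j ≤ k + 1 → w ∈ wds x →
      (∀ g ∈ a.1, g ∈ atm k x) → (∀ g ∈ a.2, g ∈ atm k x) →
      (∀ m, inI m a → XB k x ((s, j, w), (s', j', sk)) m) →
      covers D ((s, j, w), (s', j', sk)) a := by
    intro s j w s' j' sk a hs hj hw h1 h2 h
    exact hD2 _ (hlab _ _ _ _ _ _ _ (h 0 (inI_zero _)) hs hj hw) a h h1 h2
  let P0 : Finset Place := (insert (x.2.1.2, 0) (atm k x)).image Sum.inl ∪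
    ((Finset.range (k + 2) ×ˢ (sts x).toFinset ×ˢ Sk ×ˢ (D.map Prod.snd).toFinset).filter
      (fun t => t.1 + t.2.2.1.length ≤ k + 1)).image Sum.inr
  have hPl : ∀ g : Atom, (Sum.inl g : Place) ∈ P0 ↔ g = (x.2.1.2, 0) ∨ g ∈ atm k x := by
    intro g
    simp [P0]
  have hPr : ∀ t : Tok, (Sum.inr t : Place) ∈ P0 ↔ t.2.1 ∈ sts x ∧ t.2.2.1 ∈ Sk ∧
      (∃ l, (l, t.2.2.2) ∈ D) ∧ t.1 + t.2.2.1.length ≤ k + 1 := by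
    intro t
    simp only [P0, Finset.mem_union, Finset.mem_image, reduceCtorEq, and_false, exists_false,
      Sum.inr.injEq, exists_eq_right, Finset.mem_filter, Finset.mem_product, Finset.mem_range,
      List.mem_toFinset, List.mem_map, Prod.exists, exists_eq_right, false_or]
    constructor
    · rintro ⟨⟨_, h1, h2, h3⟩, h4⟩
      exact ⟨h1, h2, h3, h4⟩
    · rintro ⟨h1, h2, h3, h4⟩
      exact ⟨⟨by omega, h1, h2, h3⟩, h4⟩
  obtain ⟨Inv, hI1, hI2⟩ := decomp (sts x).toFinset P0 (XI k x) (fun l m m' h => XI.mono h)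
  have hfire : ∀ (q : ℕ) (a r : Idl Place) (p : Place) (q' : ℕ), (∀ m, inI m a → XI k x q m) →
      p ∈ a.1 ++ a.2 → (∀ p ∈ a.1, p ∈ P0) → (∀ p ∈ a.2, p ∈ P0) → (∀ p ∈ r.1, p ∈ P0) →
      (∀ p ∈ r.2, p ∈ P0) → q' ∈ sts x →
      (∀ m0 s, XI k x q (p ::ₘ m0) → inI s r → XI k x q' (s + m0)) →
      fires Inv q' (r.1 ++ a.1, r.2 ++ a.2) ([p], []) := by
    intro q a r p q' ha hp ha1 ha2 hr1 hr2 hq' hstep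
    obtain ⟨h1, h2⟩ := fire_complete ha (List.mem_append.1 hp) (fun m m' h => XI.mono h) hstep
    obtain ⟨e, he, he1, hle⟩ := hI2 q' (by simpa using hq') _ h1
      (by
        intro p hp
        rcases List.mem_append.1 hp with h | h
        exacts [hr1 _ h, ha1 _ (mem_of_erase h)])
      (by
        intro p hp
        rcases List.mem_append.1 hp with h | h
        exacts [hr2 _ h, ha2 _ h])
    exact ⟨e, he, he1, h2 _ hle⟩
  refine ⟨ctl x, wds x, D, Inv, ?_⟩
  constructor
  case done => simp [ctl]
  case q0a => exact mem_ctl0.2 (by simp [sts])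
  case q0b => exact mem_ctl1.2 (by simp [sts])
  case γ0 => exact wds_of_bwds (by simp [bwds])
  case crC =>
    intro r hr
    refine ⟨mem_ctl0.2 (crs_sts hr).2, mem_ctl1.2 (crs_sts hr).2, wds_of_bwds ?_, fun a ha =>
      wds_of_bwds ?_⟩
    · simp only [bwds, List.mem_cons, List.mem_append, List.mem_map]
      exact Or.inr (Or.inr (Or.inl ⟨r, hr, rfl⟩))
    · simp only [bwds, List.mem_cons, List.mem_append, List.mem_map, List.mem_flatMap]
      exact Or.inr (Or.inr (Or.inr (Or.inl ⟨r, hr, a, ha, rfl⟩)))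
  case inC =>
    intro r hr
    refine ⟨mem_ctl0.2 (ins_sts hr).2, mem_ctl1.2 (ins_sts hr).2, wds_of_bwds ?_⟩
    simp only [bwds, List.mem_cons, List.mem_append, List.mem_map]
    exact Or.inr (Or.inr (Or.inr (Or.inr ⟨r, hr, rfl⟩)))
  case reC =>
    intro r hr
    exact ⟨mem_ctl0.2 (res_sts hr).2, mem_ctl1.2 (res_sts hr).2⟩
  case tl =>
    intro w hw
    simp only [wds, List.mem_flatMap, List.mem_tails] at hw ⊢
    obtain ⟨a, ha, hw⟩ := hw
    exact ⟨a, ha, (List.tail_suffix w).trans hw⟩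
  case nil =>
    intro s hs j hj
    refine hcov _ _ _ _ _ _ _ hs (by have := List.mem_range.1 hj; omega)
      (wds_of_bwds (by simp [bwds])) (by simp) (by simp) fun m hm => ?_
    rw [inI_nil_iff] at hm
    exact ⟨_, hm, Beh.nil _ _⟩
  case don =>
    intro s hs j hj w hw
    refine hcov _ _ _ _ _ _ _ hs (by have := List.mem_range.1 hj; omega)
      hw (by simp) (by simp) fun m hm => ?_
    rw [inI_nil_iff] at hm
    exact ⟨_, hm, Beh.done _ _ _⟩
  case cr =>
    rintro ⟨⟨q, γ⟩, ⟨q', u⟩, α⟩ hr ⟨⟨⟨s0, j0, w0⟩, ⟨s1, j1, k1⟩⟩, a1⟩ hf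
      ⟨⟨⟨s1', j1', w1⟩, ⟨s2, j2, k2⟩⟩, a2⟩ hg w hw e1 e2 hj e3 e4 e5
    simp only at e1 e2 hj e3 e4 e5
    subst e1 e2 e3 e4 e5
    obtain ⟨hf1, hf2, hf3, hf4⟩ := hD1 _ hf
    obtain ⟨hg1, hg2, hg3, hg4⟩ := hD1 _ hg
    simp only at hf2 hf3 hf4 hg2 hg3 hg4
    refine hcov _ _ _ _ _ _ _ (mem_ctl0.2 (crs_sts hr).1) (by simp only; omega) hw ?_ ?_ ?_
    · intro g hg
      simp only [List.mem_append] at hg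
      rcases hg with h | h | h
      exacts [spA_atm hr hj g h, hf3 g h, hg3 g h]
    · intro g hg
      simp only [List.mem_append] at hg
      rcases hg with h | h
      exacts [hf4 g h, hg4 g h]
    · intro m hm
      obtain ⟨m0, m', h0, h', hle⟩ := inI_split (a := (spA α (j0 + 1), []))
        (b := (a1.1 ++ a2.1, a1.2 ++ a2.2)) hm
      obtain ⟨m1, m2, h1, h2, hle'⟩ := inI_split h'
      rw [inI_nil_iff] at h0
      obtain ⟨M1, hM1, hb1⟩ := hf2 _ h1
      obtain ⟨M2, hM2, hb2⟩ := hg2 _ h2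
      exact ⟨_, hle.trans (add_le_add h0 (hle'.trans (add_le_add hM1 hM2))),
        Beh.cr (mem_crs.2 hr) hj hb1 hb2⟩
  case intr =>
    rintro ⟨⟨q, γ⟩, ⟨q', u⟩⟩ hr ⟨⟨⟨⟨t, b⟩, j0, w0⟩, ⟨s1, j1, k1⟩⟩, a1⟩ hf
      ⟨⟨⟨s1', j1', w1⟩, ⟨s2, j2, k2⟩⟩, a2⟩ hg w hw hbC e0 e1 j hj e2 e3 e4 e5
    have hj := List.mem_range.1 hj
    simp only at hbC e0 e1 e2 e3 e4 e5
    subst e0 e1 e2 e3 e4 e5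
    obtain ⟨hf1, hf2, hf3, hf4⟩ := hD1 _ hf
    obtain ⟨hg1, hg2, hg3, hg4⟩ := hD1 _ hg
    simp only at hf2 hf3 hf4 hg2 hg3 hg4
    refine hcov _ _ _ _ _ _ _ (mem_ctl0.2 (ins_sts hr).1) (by omega) hw ?_ ?_ ?_
    · intro g hg
      simp only [List.mem_append] at hg
      rcases hg with h | h
      exacts [hf3 g h, hg3 g h]
    · intro g hg
      simp only [List.mem_append] at hg
      rcases hg with h | h
      exacts [hf4 g h, hg4 g h]
    · intro m hm
      obtain ⟨m1, m2, h1, h2, hle'⟩ := inI_split hm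
      obtain ⟨M1, hM1, hb1⟩ := hf2 _ h1
      obtain ⟨M2, hM2, hb2⟩ := hg2 _ h2
      exact ⟨_, hle'.trans (add_le_add hM1 hM2),
        Beh.intr (mem_ins.2 hr) (by simp only; omega) hbC hb1 hb2⟩
  case res =>
    rintro ⟨q, γ, q'⟩ hr ⟨⟨⟨s0, j0, w0⟩, ⟨s1, j1, k1⟩⟩, a1⟩ hf e1 e2 hj
    simp only at e1 e2 hj
    subst e1
    obtain ⟨w, rfl⟩ := List.head?_eq_some_iff.1 e2
    obtain ⟨hf1, hf2, hf3, hf4⟩ := hD1 _ hf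
    refine hcov _ _ _ _ _ _ _ (mem_ctl1.2 (res_sts hr).1) (by omega) ((hL _).1 hf1).1.2.2 hf3 hf4 ?_
    intro m hm
    obtain ⟨M1, hM1, hb1⟩ := hf2 _ hm
    exact ⟨_, hM1, Beh.res (mem_res.2 hr) hj hb1⟩
  case init =>
    refine hI2 _ (by simp [sts]) _ (fun m hm => XI.init k x m hm) ?_ (by simp)
    intro p hp
    rw [List.mem_singleton] at hp
    rw [hp, hPl]
    exact Or.inl rfl
  case fin =>
    intro e he hq
    exact hF ⟨_, hq, XI.zero ((hI1 e he).2.1 0 (inI_zero _))⟩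
  case start =>
    rintro ⟨q, a⟩ he ⟨⟨⟨⟨t, b⟩, j0, w0⟩, ⟨s1, j1, k1⟩⟩, d⟩ hf e1 g _ e2 hp
    simp only at e1 e2 hp
    subst e1 e2
    obtain ⟨h1, h2, h3, h4⟩ := hI1 _ he
    obtain ⟨hf1, hf2, hf3, hf4⟩ := hD1 _ hf
    have hlab1 := (hL _).1 hf1
    have hst : ∀ m0 s, XI k x q (Sum.inl (g, j0) ::ₘ m0) →
        inI s (([Sum.inr (j0, b, k1, d)], []) : Idl Place) → XI k x q (s + m0) :=
      fun m0 s => XI.start hf2 m0 s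
    have hq : q ∈ sts x := List.mem_toFinset.1 h1
    refine hfire q a ([Sum.inr (j0, b, k1, d)], []) (Sum.inl (g, j0)) q h2 hp h3 h4 ?_
      (fun _ h => absurd h List.not_mem_nil) hq hst
    intro p hp
    rw [List.mem_singleton] at hp
    rw [hp, hPr]
    refine ⟨mem_ctl1.1 hlab1.1.1, hlab1.2.2.2, ⟨_, hf⟩, ?_⟩
    obtain ⟨M, _, hb⟩ := hf2 0 (inI_zero _)
    have := hb.level.1
    have := hlab1.2.2.1
    simp only at *
    omega
  case act =>
    rintro ⟨q, a⟩ he p hp ⟨j, b, sk', d⟩ ht e1 ⟨q', b'⟩ hab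
    simp only at e1 hp hab
    subst e1
    obtain ⟨sk, rfl⟩ : ∃ sk, sk' = (q', b') :: sk := exists_of_head hab
    obtain rfl : p = Sum.inr (j, b, (q', b') :: sk, d) := eq_inr_of_getRight ht
    obtain ⟨h1, h2, h3, h4⟩ := hI1 _ he
    have hpP : (Sum.inr (j, b, (q', b') :: sk, d) : Place) ∈ P0 := by
      rcases List.mem_append.1 hp with h | h
      exacts [h3 _ h, h4 _ h]
    rw [hPr] at hpP
    obtain ⟨hb, hsk, ⟨l, hl⟩, hlen⟩ := hpP
    simp only at hb hsk hl hlen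
    rw [hSk] at hsk
    have hqb := hsk.2 (q', b') (by simp)
    simp only [Finset.mem_product, List.mem_toFinset] at hqb
    obtain ⟨hf1, hf2, hf3, hf4⟩ := hD1 _ hl
    simp only [List.length_cons] at hlen hsk
    refine hfire b a (actR j b' sk d) _ q' h2 hp h3 h4 ?_ ?_ hqb.1 (fun m0 s => XI.act m0 s)
    · intro p hp
      simp only [actR, List.mem_cons, List.mem_map, lvl, List.mem_filter] at hp
      rcases hp with rfl | ⟨g, hg, rfl⟩
      · rw [hPr]
        refine ⟨hqb.2, (hSk _).2 ⟨by simp only; omega, fun a ha => hsk.2 a (by simp [ha])⟩,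
          ⟨l, hl⟩, by simp only; omega⟩
      · rw [hPl]; exact Or.inr (hf3 g hg.1)
    · intro p hp
      simp only [actR, List.mem_map, lvl, List.mem_filter] at hp
      obtain ⟨g, hg, rfl⟩ := hp
      rw [hPl]; exact Or.inr (hf4 g hg.1)


section toolkit
variable {α β γ σ : Type} [Primcodable α] [Primcodable β] [Primcodable γ] [Primcodable σ]

theorem re_of_primrec {p : α → β → Prop} (h : PrimrecPred fun z : α × β => p z.1 z.2) :
    REPred fun a => ∃ b, p a b := by
  classical
  have hp : Primrec₂ fun (a : α) (n : ℕ) =>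
      ((Encodable.decode n : Option β).bind fun b => if p a b then some () else none) := by
    refine Primrec.option_bind (Primrec.decode.comp Primrec.snd) ?_
    refine Primrec.ite (PrimrecPred.comp h
      (Primrec.pair (Primrec.fst.comp Primrec.fst) Primrec.snd)) (Primrec.const _) (Primrec.const _)
  refine (Partrec.dom_re (Partrec.rfindOpt hp.to_comp)).of_eq fun a => ?_
  rw [Nat.rfindOpt_dom]
  constructor
  · rintro ⟨n, u, hu⟩
    simp only [Option.mem_def, Option.bind_eq_some_iff] at hu
    obtain ⟨b, _, hb⟩ := hu
    refine ⟨b, ?_⟩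
    by_contra hc
    simp [hc] at hb
  · rintro ⟨b, hb⟩
    exact ⟨Encodable.encode b, (), by simp [hb]⟩

theorem pr_fst {f : α → β × γ} (h : Primrec f) : Primrec fun a => (f a).1 := Primrec.fst.comp h
theorem pr_snd {f : α → β × γ} (h : Primrec f) : Primrec fun a => (f a).2 := Primrec.snd.comp h
theorem pr_pair {f : α → β} {g : α → γ} (h : Primrec f) (h' : Primrec g) :
    Primrec fun a => (f a, g a) := Primrec.pair h h'
theorem pr_cons {f : α → β} {g : α → List β} (h : Primrec f) (h' : Primrec g) :
    Primrec fun a => f a :: g a := Primrec.list_cons.comp h h'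
theorem pr_app {f : α → List β} {g : α → List β} (h : Primrec f) (h' : Primrec g) :
    Primrec fun a => f a ++ g a := Primrec.list_append.comp h h'
theorem pr_tail {f : α → List β} (h : Primrec f) : Primrec fun a => (f a).tail :=
  Primrec.list_tail.comp h
theorem pr_head {f : α → List β} (h : Primrec f) : Primrec fun a => (f a).head? :=
  Primrec.list_head?.comp h
theorem pr_toList {f : α → Option β} (h : Primrec f) : Primrec fun a => (f a).toList :=
  Primrec.optionToList.comp h
theorem pr_some {f : α → β} (h : Primrec f) : Primrec fun a => some (f a) :=
  Primrec.option_some.comp h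
theorem pr_succ {f : α → ℕ} (h : Primrec f) : Primrec fun a => f a + 1 :=
  Primrec.succ.comp h
theorem pr_inl {f : α → β} (h : Primrec f) : Primrec fun a => (Sum.inl (f a) : β ⊕ γ) :=
  Primrec.sumInl.comp h
theorem pr_inr {f : α → γ} (h : Primrec f) : Primrec fun a => (Sum.inr (f a) : β ⊕ γ) :=
  Primrec.sumInr.comp h
theorem pr_getRight {f : α → β ⊕ γ} (h : Primrec f) : Primrec fun a => (f a).getRight? :=
  (Primrec.sumCasesOn h (Primrec.const (none : Option γ)).to₂
    (Primrec.option_some.comp Primrec.snd).to₂).of_eq fun a => by cases f a <;> rfl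
theorem pr_map {f : α → List β} {g : β → γ} (h : Primrec f) (hg : Primrec g) :
    Primrec fun a => (f a).map g := Primrec.list_map h (hg.comp Primrec.snd).to₂

theorem pr_eq {f g : α → β} (h : Primrec f) (h' : Primrec g) :
    PrimrecPred fun a => f a = g a := by
  have : DecidableEq β := Encodable.decidableEqOfEncodable β
  exact Primrec.eq.comp h h'
theorem pr_le {f g : α → ℕ} (h : Primrec f) (h' : Primrec g) :
    PrimrecPred fun a => f a ≤ g a := Primrec.nat_le.comp h h'
theorem pr_lt {f g : α → ℕ} (h : Primrec f) (h' : Primrec g) :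
    PrimrecPred fun a => f a < g a := Primrec.nat_lt.comp h h'
theorem pr_and {p q : α → Prop} (h : PrimrecPred p) (h' : PrimrecPred q) :
    PrimrecPred fun a => p a ∧ q a := h.and h'
theorem pr_or {p q : α → Prop} (h : PrimrecPred p) (h' : PrimrecPred q) :
    PrimrecPred fun a => p a ∨ q a := h.or h'
theorem pr_not {p : α → Prop} (h : PrimrecPred p) : PrimrecPred fun a => ¬ p a := h.not
theorem pr_imp {p q : α → Prop} (h : PrimrecPred p) (h' : PrimrecPred q) :
    PrimrecPred fun a => p a → q a := (h.not.or h').of_eq fun a => imp_iff_not_or.symm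
theorem pr_all {f : α → List β} {p : α → β → Prop} (hf : Primrec f)
    (hp : PrimrecPred fun z : α × β => p z.1 z.2) : PrimrecPred fun a => ∀ b ∈ f a, p a b := by
  have h : PrimrecRel fun (b : β) (a : α) => p a b :=
    hp.comp (Primrec.pair Primrec.snd Primrec.fst)
  exact h.forall_mem_list.comp hf Primrec.id
theorem pr_ex {f : α → List β} {p : α → β → Prop} (hf : Primrec f)
    (hp : PrimrecPred fun z : α × β => p z.1 z.2) : PrimrecPred fun a => ∃ b ∈ f a, p a b := by
  have h : PrimrecRel fun (b : β) (a : α) => p a b :=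
    hp.comp (Primrec.pair Primrec.snd Primrec.fst)
  exact h.exists_mem_list.comp hf Primrec.id
theorem pr_mem {f : α → β} {g : α → List β} (hf : Primrec f) (hg : Primrec g) :
    PrimrecPred fun a => f a ∈ g a :=
  (pr_ex hg (p := fun a b => b = f a) (pr_eq Primrec.snd (hf.comp Primrec.fst))).of_eq
    fun a => by simp

theorem pr_count [DecidableEq β] {f : α → β} {g : α → List β} (hf : Primrec f) (hg : Primrec g) :
    Primrec fun a => (g a).count (f a) := by
  have h : PrimrecRel fun (a b : β) => a = b := Primrec.eq
  refine (Primrec.list_length.comp (h.listFilter.comp hg hf)).of_eq fun a => ?_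
  rw [List.count_eq_length_filter]
  congr 1

theorem pr_leI [DecidableEq β] {f g : α → Idl β} (hf : Primrec f) (hg : Primrec g) :
    PrimrecPred fun a => leI (f a) (g a) := by
  unfold leI
  refine pr_and (pr_all (pr_snd hf) (pr_mem Primrec.snd (pr_snd (hg.comp Primrec.fst))))
    (pr_all (pr_fst hf) (pr_or (pr_mem Primrec.snd (pr_snd (hg.comp Primrec.fst)))
      (pr_le (pr_count Primrec.snd (pr_fst (hf.comp Primrec.fst)))
        (pr_count Primrec.snd (pr_fst (hg.comp Primrec.fst))))))

theorem pr_covers [DecidableEq β] {f : α → List (γ × Idl β)} {l : α → γ} {g : α → Idl β}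
    (hf : Primrec f) (hl : Primrec l) (hg : Primrec g) :
    PrimrecPred fun a => covers (f a) (l a) (g a) := by
  unfold covers
  refine pr_ex hf (pr_and (pr_eq (pr_fst Primrec.snd) (hl.comp Primrec.fst))
    (pr_leI (hg.comp Primrec.fst) (pr_snd Primrec.snd)))

theorem pr_fires {f : α → List InvE} {q : α → ℕ} {l r : α → Idl Place}
    (hf : Primrec f) (hq : Primrec q) (hl : Primrec l) (hr : Primrec r) :
    PrimrecPred fun a => fires (f a) (q a) (l a) (r a) := by
  unfold fires
  have hr' := hr.comp (Primrec.fst (α := α) (β := InvE))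
  refine pr_ex hf (pr_and (pr_eq (pr_fst Primrec.snd) (hq.comp Primrec.fst))
    (pr_leI (hl.comp Primrec.fst) (pr_pair (pr_app (pr_fst hr') (pr_fst (pr_snd Primrec.snd)))
      (pr_app (pr_snd hr') (pr_snd (pr_snd Primrec.snd))))))

theorem pr_lvl {f : α → ℕ} {g : α → List Atom} (hf : Primrec f) (hg : Primrec g) :
    Primrec fun a => lvl (f a) (g a) := by
  have h : PrimrecRel fun (a : Atom) (b : ℕ) => a.2 = b :=
    pr_eq (pr_snd Primrec.fst) Primrec.snd
  exact h.listFilter.comp hg hf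

theorem pr_spA {f : α → Option ℕ} {g : α → ℕ} (hf : Primrec f) (hg : Primrec g) :
    Primrec fun a => spA (f a) (g a) :=
  Primrec.list_map (pr_toList hf) (pr_pair Primrec.snd (hg.comp Primrec.fst)).to₂

theorem pr_actR {j b : α → ℕ} {sk : α → Skel} {a : α → Idl Atom} (hj : Primrec j)
    (hb : Primrec b) (hs : Primrec sk) (ha : Primrec a) :
    Primrec fun z => actR (j z) (b z) (sk z) (a z) :=
  pr_pair (pr_cons (pr_inr (pr_pair (pr_succ hj) (pr_pair hb (pr_pair hs ha))))
    (pr_map (pr_lvl (pr_succ hj) (pr_fst ha)) Primrec.sumInl))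
    (pr_map (pr_lvl (pr_succ hj) (pr_snd ha)) Primrec.sumInl)

theorem pr_toCr : Primrec toCr :=
  (Primrec.sumCasesOn Primrec.id (Primrec.option_some.comp Primrec.snd).to₂
    (Primrec.const (none : Option CrE)).to₂).of_eq fun a => by rcases a with a | a <;> rfl
theorem pr_toIn : Primrec toIn :=
  (Primrec.sumCasesOn Primrec.id (Primrec.const (none : Option InE)).to₂
    (Primrec.sumCasesOn Primrec.snd (Primrec.option_some.comp Primrec.snd).to₂
      (Primrec.const (none : Option InE)).to₂).to₂).of_eq fun a => by
        rcases a with a | a | a <;> rfl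
theorem pr_toRe : Primrec toRe :=
  (Primrec.sumCasesOn Primrec.id (Primrec.const (none : Option ReE)).to₂
    (Primrec.sumCasesOn Primrec.snd (Primrec.const (none : Option ReE)).to₂
      (Primrec.option_some.comp Primrec.snd).to₂).to₂).of_eq fun a => by
        rcases a with a | a | a <;> rfl
theorem pr_crs {f : α → Inst} (hf : Primrec f) : Primrec fun a => crs (f a) :=
  Primrec.listFilterMap (pr_fst hf) (pr_toCr.comp Primrec.snd).to₂
theorem pr_ins {f : α → Inst} (hf : Primrec f) : Primrec fun a => ins (f a) :=
  Primrec.listFilterMap (pr_fst hf) (pr_toIn.comp Primrec.snd).to₂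
theorem pr_res {f : α → Inst} (hf : Primrec f) : Primrec fun a => res (f a) :=
  Primrec.listFilterMap (pr_fst hf) (pr_toRe.comp Primrec.snd).to₂
theorem pr_thr : Primrec thr :=
  pr_pair (pr_cons (pr_fst Primrec.id) (Primrec.const _)) (pr_snd Primrec.id)

end toolkit

theorem pr_id {α : Type} [Primcodable α] : Primrec fun a : α => a := Primrec.id
set_option synthInstance.maxSize 4000
set_option linter.all false

theorem prOk_done (k : ℕ) : PrimrecPred fun z : Inst × Cert =>
    ((2, 0) : Ctrl) ∈ z.2.1 := by
  repeat' with_reducible first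
    | exact pr_id
    | exact Primrec.const _
    | apply pr_fst
    | apply pr_snd
    | apply pr_all
    | apply pr_not
    | apply pr_imp
    | apply pr_and
    | apply pr_mem
    | apply pr_eq
    | apply pr_le
    | apply pr_covers
    | apply pr_fires
    | apply pr_crs
    | apply pr_ins
    | apply pr_res
    | apply pr_spA
    | apply pr_actR
    | apply pr_pair
    | apply pr_cons
    | apply pr_app
    | apply pr_tail
    | apply pr_head
    | apply pr_toList
    | apply pr_some
    | apply pr_succ
    | apply pr_inl
    | apply pr_inr
    | apply pr_getRight

theorem prOk_q0a (k : ℕ) : PrimrecPred fun z : Inst × Cert =>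
    ((0, z.1.2.1.1) : Ctrl) ∈ z.2.1 := by
  repeat' with_reducible first
    | exact pr_id
    | exact Primrec.const _
    | apply pr_fst
    | apply pr_snd
    | apply pr_all
    | apply pr_not
    | apply pr_imp
    | apply pr_and
    | apply pr_mem
    | apply pr_eq
    | apply pr_le
    | apply pr_covers
    | apply pr_fires
    | apply pr_crs
    | apply pr_ins
    | apply pr_res
    | apply pr_spA
    | apply pr_actR
    | apply pr_pair
    | apply pr_cons
    | apply pr_app
    | apply pr_tail
    | apply pr_head
    | apply pr_toList
    | apply pr_some
    | apply pr_succ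
    | apply pr_inl
    | apply pr_inr
    | apply pr_getRight

theorem prOk_q0b (k : ℕ) : PrimrecPred fun z : Inst × Cert =>
    ((1, z.1.2.1.1) : Ctrl) ∈ z.2.1 := by
  repeat' with_reducible first
    | exact pr_id
    | exact Primrec.const _
    | apply pr_fst
    | apply pr_snd
    | apply pr_all
    | apply pr_not
    | apply pr_imp
    | apply pr_and
    | apply pr_mem
    | apply pr_eq
    | apply pr_le
    | apply pr_covers
    | apply pr_fires
    | apply pr_crs
    | apply pr_ins
    | apply pr_res
    | apply pr_spA
    | apply pr_actR
    | apply pr_pair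
    | apply pr_cons
    | apply pr_app
    | apply pr_tail
    | apply pr_head
    | apply pr_toList
    | apply pr_some
    | apply pr_succ
    | apply pr_inl
    | apply pr_inr
    | apply pr_getRight

theorem prOk_γ0 (k : ℕ) : PrimrecPred fun z : Inst × Cert =>
    [z.1.2.1.2] ∈ z.2.2.1 := by
  repeat' with_reducible first
    | exact pr_id
    | exact Primrec.const _
    | apply pr_fst
    | apply pr_snd
    | apply pr_all
    | apply pr_not
    | apply pr_imp
    | apply pr_and
    | apply pr_mem
    | apply pr_eq
    | apply pr_le
    | apply pr_covers
    | apply pr_fires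
    | apply pr_crs
    | apply pr_ins
    | apply pr_res
    | apply pr_spA
    | apply pr_actR
    | apply pr_pair
    | apply pr_cons
    | apply pr_app
    | apply pr_tail
    | apply pr_head
    | apply pr_toList
    | apply pr_some
    | apply pr_succ
    | apply pr_inl
    | apply pr_inr
    | apply pr_getRight

theorem prOk_crC (k : ℕ) : PrimrecPred fun z : Inst × Cert =>
    ∀ r ∈ crs z.1, ((0, r.2.1.1) : Ctrl) ∈ z.2.1 ∧ ((1, r.2.1.1) : Ctrl) ∈ z.2.1 ∧ r.2.1.2 ∈ z.2.2.1 ∧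
    ∀ a ∈ r.2.2.toList, [a] ∈ z.2.2.1 := by
  repeat' with_reducible first
    | exact pr_id
    | exact Primrec.const _
    | apply pr_fst
    | apply pr_snd
    | apply pr_all
    | apply pr_not
    | apply pr_imp
    | apply pr_and
    | apply pr_mem
    | apply pr_eq
    | apply pr_le
    | apply pr_covers
    | apply pr_fires
    | apply pr_crs
    | apply pr_ins
    | apply pr_res
    | apply pr_spA
    | apply pr_actR
    | apply pr_pair
    | apply pr_cons
    | apply pr_app
    | apply pr_tail
    | apply pr_head
    | apply pr_toList
    | apply pr_some
    | apply pr_succ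
    | apply pr_inl
    | apply pr_inr
    | apply pr_getRight

theorem prOk_inC (k : ℕ) : PrimrecPred fun z : Inst × Cert =>
    ∀ r ∈ ins z.1, ((0, r.2.1) : Ctrl) ∈ z.2.1 ∧ ((1, r.2.1) : Ctrl) ∈ z.2.1 ∧ r.2.2 ∈ z.2.2.1 := by
  repeat' with_reducible first
    | exact pr_id
    | exact Primrec.const _
    | apply pr_fst
    | apply pr_snd
    | apply pr_all
    | apply pr_not
    | apply pr_imp
    | apply pr_and
    | apply pr_mem
    | apply pr_eq
    | apply pr_le
    | apply pr_covers
    | apply pr_fires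
    | apply pr_crs
    | apply pr_ins
    | apply pr_res
    | apply pr_spA
    | apply pr_actR
    | apply pr_pair
    | apply pr_cons
    | apply pr_app
    | apply pr_tail
    | apply pr_head
    | apply pr_toList
    | apply pr_some
    | apply pr_succ
    | apply pr_inl
    | apply pr_inr
    | apply pr_getRight

theorem prOk_reC (k : ℕ) : PrimrecPred fun z : Inst × Cert =>
    ∀ r ∈ res z.1, ((0, r.2.2) : Ctrl) ∈ z.2.1 ∧ ((1, r.2.2) : Ctrl) ∈ z.2.1 := by
  repeat' with_reducible first
    | exact pr_id
    | exact Primrec.const _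
    | apply pr_fst
    | apply pr_snd
    | apply pr_all
    | apply pr_not
    | apply pr_imp
    | apply pr_and
    | apply pr_mem
    | apply pr_eq
    | apply pr_le
    | apply pr_covers
    | apply pr_fires
    | apply pr_crs
    | apply pr_ins
    | apply pr_res
    | apply pr_spA
    | apply pr_actR
    | apply pr_pair
    | apply pr_cons
    | apply pr_app
    | apply pr_tail
    | apply pr_head
    | apply pr_toList
    | apply pr_some
    | apply pr_succ
    | apply pr_inl
    | apply pr_inr
    | apply pr_getRight

theorem prOk_tl (k : ℕ) : PrimrecPred fun z : Inst × Cert =>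
    ∀ w ∈ z.2.2.1, w.tail ∈ z.2.2.1 := by
  repeat' with_reducible first
    | exact pr_id
    | exact Primrec.const _
    | apply pr_fst
    | apply pr_snd
    | apply pr_all
    | apply pr_not
    | apply pr_imp
    | apply pr_and
    | apply pr_mem
    | apply pr_eq
    | apply pr_le
    | apply pr_covers
    | apply pr_fires
    | apply pr_crs
    | apply pr_ins
    | apply pr_res
    | apply pr_spA
    | apply pr_actR
    | apply pr_pair
    | apply pr_cons
    | apply pr_app
    | apply pr_tail
    | apply pr_head
    | apply pr_toList
    | apply pr_some
    | apply pr_succ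
    | apply pr_inl
    | apply pr_inr
    | apply pr_getRight

theorem prOk_nil (k : ℕ) : PrimrecPred fun z : Inst × Cert =>
    ∀ s ∈ z.2.1, ∀ j ∈ List.range (k + 2), covers z.2.2.2.1 ((s, j, []), (s, j, [])) (([], []) : Idl Atom) := by
  repeat' with_reducible first
    | exact pr_id
    | exact Primrec.const _
    | apply pr_fst
    | apply pr_snd
    | apply pr_all
    | apply pr_not
    | apply pr_imp
    | apply pr_and
    | apply pr_mem
    | apply pr_eq
    | apply pr_le
    | apply pr_covers
    | apply pr_fires
    | apply pr_crs
    | apply pr_ins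
    | apply pr_res
    | apply pr_spA
    | apply pr_actR
    | apply pr_pair
    | apply pr_cons
    | apply pr_app
    | apply pr_tail
    | apply pr_head
    | apply pr_toList
    | apply pr_some
    | apply pr_succ
    | apply pr_inl
    | apply pr_inr
    | apply pr_getRight

theorem prOk_don (k : ℕ) : PrimrecPred fun z : Inst × Cert =>
    ∀ s ∈ z.2.1, ∀ j ∈ List.range (k + 2), ∀ w ∈ z.2.2.1,
    covers z.2.2.2.1 ((s, j, w), ((2, 0), j, [])) (([], []) : Idl Atom) := by
  repeat' with_reducible first
    | exact pr_id
    | exact Primrec.const _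
    | apply pr_fst
    | apply pr_snd
    | apply pr_all
    | apply pr_not
    | apply pr_imp
    | apply pr_and
    | apply pr_mem
    | apply pr_eq
    | apply pr_le
    | apply pr_covers
    | apply pr_fires
    | apply pr_crs
    | apply pr_ins
    | apply pr_res
    | apply pr_spA
    | apply pr_actR
    | apply pr_pair
    | apply pr_cons
    | apply pr_app
    | apply pr_tail
    | apply pr_head
    | apply pr_toList
    | apply pr_some
    | apply pr_succ
    | apply pr_inl
    | apply pr_inr
    | apply pr_getRight

theorem prOk_cr (k : ℕ) : PrimrecPred fun z : Inst × Cert =>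
    ∀ r ∈ crs z.1, ∀ f ∈ z.2.2.2.1, ∀ g ∈ z.2.2.2.1, ∀ w ∈ z.2.2.1, f.1.1.1 = (0, r.2.1.1) → f.1.1.2.2 = r.2.1.2 →
    f.1.1.2.1 ≤ k → g.1.1.1 = f.1.2.1 → g.1.1.2.1 = f.1.2.2.1 → w = r.1.2 :: g.1.1.2.2 →
    covers z.2.2.2.1 (((0, r.1.1), f.1.1.2.1, w), (g.1.2.1, g.1.2.2.1, f.1.2.2.2 ++ g.1.2.2.2))
      (spA r.2.2 (f.1.1.2.1 + 1) ++ (f.2.1 ++ g.2.1), f.2.2 ++ g.2.2) := by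
  repeat' with_reducible first
    | exact pr_id
    | exact Primrec.const _
    | apply pr_fst
    | apply pr_snd
    | apply pr_all
    | apply pr_not
    | apply pr_imp
    | apply pr_and
    | apply pr_mem
    | apply pr_eq
    | apply pr_le
    | apply pr_covers
    | apply pr_fires
    | apply pr_crs
    | apply pr_ins
    | apply pr_res
    | apply pr_spA
    | apply pr_actR
    | apply pr_pair
    | apply pr_cons
    | apply pr_app
    | apply pr_tail
    | apply pr_head
    | apply pr_toList
    | apply pr_some
    | apply pr_succ
    | apply pr_inl
    | apply pr_inr
    | apply pr_getRight

theorem prOk_intr (k : ℕ) : PrimrecPred fun z : Inst × Cert =>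
    ∀ r ∈ ins z.1, ∀ f ∈ z.2.2.2.1, ∀ g ∈ z.2.2.2.1, ∀ w ∈ z.2.2.1, f.1.1.1 ∈ z.2.1 → f.1.1.1.1 = 1 →
    f.1.1.2.2 = r.2.2 → ∀ j ∈ List.range (k + 1),
    f.1.1.2.1 = j + 1 → g.1.1.1 = f.1.2.1 → g.1.1.2.1 = f.1.2.2.1 → w = r.1.2 :: g.1.1.2.2 →
    covers z.2.2.2.1 (((0, r.1.1), j, w),
        (g.1.2.1, g.1.2.2.1, (r.2.1, f.1.1.1.2) :: (f.1.2.2.2 ++ g.1.2.2.2)))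
      (f.2.1 ++ g.2.1, f.2.2 ++ g.2.2) := by
  repeat' with_reducible first
    | exact pr_id
    | exact Primrec.const _
    | apply pr_fst
    | apply pr_snd
    | apply pr_all
    | apply pr_not
    | apply pr_imp
    | apply pr_and
    | apply pr_mem
    | apply pr_eq
    | apply pr_le
    | apply pr_covers
    | apply pr_fires
    | apply pr_crs
    | apply pr_ins
    | apply pr_res
    | apply pr_spA
    | apply pr_actR
    | apply pr_pair
    | apply pr_cons
    | apply pr_app
    | apply pr_tail
    | apply pr_head
    | apply pr_toList
    | apply pr_some
    | apply pr_succ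
    | apply pr_inl
    | apply pr_inr
    | apply pr_getRight

theorem prOk_res (k : ℕ) : PrimrecPred fun z : Inst × Cert =>
    ∀ r ∈ res z.1, ∀ f ∈ z.2.2.2.1, f.1.1.1 = (0, r.2.2) → f.1.1.2.2.head? = some r.2.1 →
    f.1.1.2.1 ≤ k → covers z.2.2.2.1 (((1, r.1), f.1.1.2), f.1.2) f.2 := by
  repeat' with_reducible first
    | exact pr_id
    | exact Primrec.const _
    | apply pr_fst
    | apply pr_snd
    | apply pr_all
    | apply pr_not
    | apply pr_imp
    | apply pr_and
    | apply pr_mem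
    | apply pr_eq
    | apply pr_le
    | apply pr_covers
    | apply pr_fires
    | apply pr_crs
    | apply pr_ins
    | apply pr_res
    | apply pr_spA
    | apply pr_actR
    | apply pr_pair
    | apply pr_cons
    | apply pr_app
    | apply pr_tail
    | apply pr_head
    | apply pr_toList
    | apply pr_some
    | apply pr_succ
    | apply pr_inl
    | apply pr_inr
    | apply pr_getRight

theorem prOk_init (k : ℕ) : PrimrecPred fun z : Inst × Cert =>
    covers z.2.2.2.2 z.1.2.1.1 ([Sum.inl (z.1.2.1.2, 0)], []) := by
  repeat' with_reducible first
    | exact pr_id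
    | exact Primrec.const _
    | apply pr_fst
    | apply pr_snd
    | apply pr_all
    | apply pr_not
    | apply pr_imp
    | apply pr_and
    | apply pr_mem
    | apply pr_eq
    | apply pr_le
    | apply pr_covers
    | apply pr_fires
    | apply pr_crs
    | apply pr_ins
    | apply pr_res
    | apply pr_spA
    | apply pr_actR
    | apply pr_pair
    | apply pr_cons
    | apply pr_app
    | apply pr_tail
    | apply pr_head
    | apply pr_toList
    | apply pr_some
    | apply pr_succ
    | apply pr_inl
    | apply pr_inr
    | apply pr_getRight

theorem prOk_fin (k : ℕ) : PrimrecPred fun z : Inst × Cert =>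
    ∀ e ∈ z.2.2.2.2, e.1 ∉ z.1.2.2 := by
  repeat' with_reducible first
    | exact pr_id
    | exact Primrec.const _
    | apply pr_fst
    | apply pr_snd
    | apply pr_all
    | apply pr_not
    | apply pr_imp
    | apply pr_and
    | apply pr_mem
    | apply pr_eq
    | apply pr_le
    | apply pr_covers
    | apply pr_fires
    | apply pr_crs
    | apply pr_ins
    | apply pr_res
    | apply pr_spA
    | apply pr_actR
    | apply pr_pair
    | apply pr_cons
    | apply pr_app
    | apply pr_tail
    | apply pr_head
    | apply pr_toList
    | apply pr_some
    | apply pr_succ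
    | apply pr_inl
    | apply pr_inr
    | apply pr_getRight

theorem prOk_start (k : ℕ) : PrimrecPred fun z : Inst × Cert =>
    ∀ e ∈ z.2.2.2.2, ∀ f ∈ z.2.2.2.1, f.1.1.1.1 = 1 → ∀ g ∈ f.1.1.2.2, f.1.1.2.2 = [g] →
    (Sum.inl (g, f.1.1.2.1) : Place) ∈ e.2.1 ++ e.2.2 →
    fires z.2.2.2.2 e.1 (Sum.inr (f.1.1.2.1, f.1.1.1.2, f.1.2.2.2, f.2) :: e.2.1, e.2.2)
      ([Sum.inl (g, f.1.1.2.1)], []) := by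
  repeat' with_reducible first
    | exact pr_id
    | exact Primrec.const _
    | apply pr_fst
    | apply pr_snd
    | apply pr_all
    | apply pr_not
    | apply pr_imp
    | apply pr_and
    | apply pr_mem
    | apply pr_eq
    | apply pr_le
    | apply pr_covers
    | apply pr_fires
    | apply pr_crs
    | apply pr_ins
    | apply pr_res
    | apply pr_spA
    | apply pr_actR
    | apply pr_pair
    | apply pr_cons
    | apply pr_app
    | apply pr_tail
    | apply pr_head
    | apply pr_toList
    | apply pr_some
    | apply pr_succ
    | apply pr_inl
    | apply pr_inr
    | apply pr_getRight

theorem prOk_act (k : ℕ) : PrimrecPred fun z : Inst × Cert =>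
    ∀ e ∈ z.2.2.2.2, ∀ p ∈ e.2.1 ++ e.2.2, ∀ t ∈ (p.getRight?).toList, t.2.1 = e.1 →
    ∀ ab ∈ t.2.2.1.head?.toList,
    fires z.2.2.2.2 ab.1 ((actR t.1 ab.2 t.2.2.1.tail t.2.2.2).1 ++ e.2.1,
      (actR t.1 ab.2 t.2.2.1.tail t.2.2.2).2 ++ e.2.2) ([p], []) := by
  repeat' with_reducible first
    | exact pr_id
    | exact Primrec.const _
    | apply pr_fst
    | apply pr_snd
    | apply pr_all
    | apply pr_not
    | apply pr_imp
    | apply pr_and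
    | apply pr_mem
    | apply pr_eq
    | apply pr_le
    | apply pr_covers
    | apply pr_fires
    | apply pr_crs
    | apply pr_ins
    | apply pr_res
    | apply pr_spA
    | apply pr_actR
    | apply pr_pair
    | apply pr_cons
    | apply pr_app
    | apply pr_tail
    | apply pr_head
    | apply pr_toList
    | apply pr_some
    | apply pr_succ
    | apply pr_inl
    | apply pr_inr
    | apply pr_getRight

theorem pr_Ok (k : ℕ) : PrimrecPred fun z : Inst × Cert =>
    Ok k z.1 z.2.1 z.2.2.1 z.2.2.2.1 z.2.2.2.2 := by
  refine PrimrecPred.of_eq ((prOk_done k).and ((prOk_q0a k).and ((prOk_q0b k).and ((prOk_γ0 k).and ((prOk_crC k).and ((prOk_inC k).and ((prOk_reC k).and ((prOk_tl k).and ((prOk_nil k).and ((prOk_don k).and ((prOk_cr k).and ((prOk_intr k).and ((prOk_res k).and ((prOk_init k).and ((prOk_fin k).and ((prOk_start k).and (prOk_act k))))))))))))))))) fun z => ⟨fun h => ?_, fun h => ?_⟩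
  · obtain ⟨h0, h1, h2, h3, h4, h5, h6, h7, h8, h9, h10, h11, h12, h13, h14, h15, h16⟩ := h
    exact ⟨h0, h1, h2, h3, h4, h5, h6, h7, h8, h9, h10, h11, h12, h13, h14, h15, h16⟩
  · exact ⟨h.done, h.q0a, h.q0b, h.γ0, h.crC, h.inC, h.reC, h.tl, h.nil, h.don, h.cr, h.intr, h.res, h.init, h.fin, h.start, h.act⟩
set_option synthInstance.maxSize 4000
set_option linter.all false

abbrev Thr := List ℕ × ℕ
abbrev Cfg := ℕ × List Thr × List Thr

def permL {β : Type} [DecidableEq β] (A B : List β) : Prop := ∀ s ∈ A ++ B, A.count s = B.count s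

theorem pr_permL {α β : Type} [Primcodable α] [Primcodable β] [DecidableEq β] {f g : α → List β}
    (hf : Primrec f) (hg : Primrec g) : PrimrecPred fun a => permL (f a) (g a) :=
  pr_all (pr_app hf hg) (pr_eq (pr_count Primrec.snd (hf.comp Primrec.fst))
    (pr_count Primrec.snd (hg.comp Primrec.fst)))

theorem permL_iff {β : Type} [DecidableEq β] {A B : List β} : permL A B ↔ A.Perm B := by
  rw [List.perm_iff_count]
  constructor
  · intro h a
    by_cases ha : a ∈ A ++ B
    · exact h a ha
    · rw [List.mem_append, not_or] at ha
      rw [List.count_eq_zero.2 ha.1, List.count_eq_zero.2 ha.2]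
  · exact fun h s _ => h s

def stepP (k : ℕ) (x : Inst) (c c' : Cfg) : Prop :=
  (∃ r ∈ crs x, ∃ t ∈ c.2.1, c.1 = r.1.1 ∧ c.2.1 = [t] ∧ t.1.head? = some r.1.2 ∧ t.2 ≤ k ∧
    c' = (r.2.1.1, [(r.2.1.2 ++ t.1.tail, t.2)], (spA r.2.2 (t.2 + 1)).map thr ++ c.2.2)) ∨
  (∃ r ∈ ins x, ∃ t ∈ c.2.1, c.1 = r.1.1 ∧ c.2.1 = [t] ∧ t.1.head? = some r.1.2 ∧ t.2 ≤ k ∧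
    c' = (r.2.1, [], (r.2.2 ++ t.1.tail, t.2 + 1) :: c.2.2)) ∨
  (∃ r ∈ res x, ∃ t ∈ c'.2.1, c.1 = r.1 ∧ c.2.1 = [] ∧ c'.1 = r.2.2 ∧ c'.2.1 = [t] ∧
    t.1.head? = some r.2.1 ∧ t.2 ≤ k ∧ permL c.2.2 (t :: c'.2.2))

def runP (k : ℕ) (x : Inst) (l : List (ℕ × Cfg)) : Prop :=
  ∀ e ∈ l, e.2 = (x.2.1.1, [], [([x.2.1.2], 0)]) ∨ ∃ e' ∈ l, e'.1 < e.1 ∧ stepP k x e'.2 e.2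

def cfgMR (k : ℕ) (x : Inst) (c : Cfg) : Prop :=
  ∃ a : Option Thr, c.2.1 = a.toList ∧ MR (instDCPS x) k c.1 a (c.2.2 : Multiset Thr)

theorem cfgMR_step {k x c c'} (h : cfgMR k x c) (hs : stepP k x c c') : cfgMR k x c' := by
  obtain ⟨q, A, V⟩ := c
  obtain ⟨q', A', V'⟩ := c'
  obtain ⟨a, ha, h⟩ := h
  dsimp only at ha h
  rcases hs with ⟨⟨⟨q1, γ⟩, ⟨q2, u⟩, α⟩, hr, ⟨w, i⟩, _, h1, h2, h3, h4, h5⟩ |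
    ⟨⟨⟨q1, γ⟩, ⟨q2, u⟩⟩, hr, ⟨w, i⟩, _, h1, h2, h3, h4, h5⟩ |
    ⟨⟨q1, γ, q2⟩, hr, ⟨w, i⟩, _, h1, h2, h3, h4, h5, h6, h7⟩
  · dsimp only at h1 h2 h3 h4 h5
    simp only [Prod.mk.injEq] at h5
    obtain ⟨rfl, rfl, rfl⟩ := h5
    rw [← mem_crs] at hr
    subst h1
    cases a with
    | none => simp [h2] at ha
    | some a =>
      simp only [h2, Option.toList_some, List.cons.injEq, and_true] at ha
      subst ha
      cases w with
      | nil => simp at h3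
      | cons g w =>
        simp only [List.head?_cons, Option.some.injEq] at h3
        subst h3
        exact ⟨some _, rfl, by simpa using MR.cr hr h4 h⟩
  · dsimp only at h1 h2 h3 h4 h5
    simp only [Prod.mk.injEq] at h5
    obtain ⟨rfl, rfl, rfl⟩ := h5
    rw [← mem_ins] at hr
    subst h1
    cases a with
    | none => simp [h2] at ha
    | some a =>
      simp only [h2, Option.toList_some, List.cons.injEq, and_true] at ha
      subst ha
      cases w with
      | nil => simp at h3
      | cons g w =>
        simp only [List.head?_cons, Option.some.injEq] at h3
        subst h3
        exact ⟨none, rfl, by simpa using MR.intr hr h4 h⟩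
  · dsimp only at h1 h2 h3 h4 h5 h6 h7
    rw [← mem_res] at hr
    subst h1 h3
    cases w with
    | nil => simp at h5
    | cons g w =>
      simp only [List.head?_cons, Option.some.injEq] at h5
      subst h5
      cases a with
      | some a => simp [h2] at ha
      | none =>
        refine ⟨some (g :: w, i), h4, MR.res hr h6 ?_⟩
        rw [Multiset.coe_eq_coe.2 (permL_iff.1 h7)] at h
        exact h

theorem runP_sound {k x l} (h : runP k x l) : ∀ n, ∀ e ∈ l, e.1 = n → cfgMR k x e.2 := by
  intro n
  induction n using Nat.strong_induction_on with
  | _ n ih =>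
    rintro e he rfl
    rcases h e he with h | ⟨e', he', hlt, hs⟩
    · rw [h]
      exact ⟨none, rfl, MR.init⟩
    · exact cfgMR_step (ih _ hlt e' he' rfl) hs

theorem runP_ext {k x l n c c'} (h : runP k x l) (hc : (n, c) ∈ l) (hs : stepP k x c c') :
    runP k x ((n + 1, c') :: l) := by
  intro e he
  rcases List.mem_cons.1 he with rfl | he
  · exact Or.inr ⟨_, List.mem_cons_of_mem _ hc, Nat.lt_succ_self _, hs⟩
  · rcases h e he with h | ⟨e', he', hh⟩
    · exact Or.inl h
    · exact Or.inr ⟨e', List.mem_cons_of_mem _ he', hh⟩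

theorem runP_complete {k x q a V} (h : MR (instDCPS x) k q a V) :
    ∃ (l : List (ℕ × Cfg)) (n : ℕ) (W : List Thr), runP k x l ∧ (W : Multiset Thr) = V ∧ (n, (q, a.toList, W)) ∈ l := by
  induction h with
  | init =>
    refine ⟨[(0, (x.2.1.1, [], [([x.2.1.2], 0)]))], 0, [([x.2.1.2], 0)], ?_, rfl, ?_⟩
    · intro e he
      rw [List.mem_singleton] at he
      subst he
      exact Or.inl rfl
    · exact List.mem_singleton.2 rfl
  | cr hr hi _ ih =>
    obtain ⟨l, n, W, hl, rfl, hm⟩ := ih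
    refine ⟨_, n + 1, _, runP_ext hl hm (Or.inl ⟨_, mem_crs.1 hr, _, List.mem_singleton.2 rfl,
      rfl, rfl, rfl, hi, rfl⟩), ?_, List.mem_cons_self⟩
    simp
  | intr hr hi _ ih =>
    obtain ⟨l, n, W, hl, rfl, hm⟩ := ih
    exact ⟨_, n + 1, _, runP_ext hl hm (Or.inr (Or.inl ⟨_, mem_ins.1 hr, _,
      List.mem_singleton.2 rfl, rfl, rfl, rfl, hi, rfl⟩)), rfl, List.mem_cons_self⟩
  | @res q γ q' w i V hr hi _ ih =>
    obtain ⟨l, n, W, hl, hW, hm⟩ := ih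
    obtain ⟨V, rfl⟩ := Quot.exists_rep V
    refine ⟨_, n + 1, V, runP_ext (c' := (q', [(γ :: w, i)], V)) hl hm
      (Or.inr (Or.inr ⟨_, mem_res.1 hr, _,
      List.mem_singleton.2 rfl, rfl, rfl, rfl, rfl, rfl, hi, ?_⟩)), rfl, List.mem_cons_self⟩
    exact permL_iff.2 (Multiset.coe_eq_coe.1 hW)

theorem reach_iff (k : ℕ) (x : Inst) : (∃ q ∈ x.2.2, KBoundedReachable (instDCPS x) k q) ↔
    ∃ l : List (ℕ × Cfg), (∃ e ∈ l, e.2.2.1 = [] ∧ e.2.1 ∈ x.2.2) ∧ runP k x l := by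
  constructor
  · rintro ⟨q, hq, h⟩
    rw [kbr_iff] at h
    obtain ⟨V, h⟩ := h
    obtain ⟨l, n, W, hl, _, hm⟩ := runP_complete h
    exact ⟨l, ⟨_, hm, rfl, hq⟩, hl⟩
  · rintro ⟨l, ⟨e, he, h1, h2⟩, hl⟩
    obtain ⟨a, ha, h⟩ := runP_sound hl _ e he rfl
    refine ⟨_, h2, (kbr_iff _ _ _).2 ⟨(e.2.2.2 : Multiset Thr), ?_⟩⟩
    · cases a with
      | none => exact h
      | some a => simp [h1] at ha

theorem pr_run (k : ℕ) : PrimrecPred fun z : Inst × List (ℕ × Cfg) =>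
    (∃ e ∈ z.2, e.2.2.1 = [] ∧ e.2.1 ∈ z.1.2.2) ∧ runP k z.1 z.2 := by
  unfold runP stepP
  repeat' with_reducible first
    | exact pr_id
    | exact Primrec.const _
    | apply pr_fst
    | apply pr_snd
    | apply pr_all
    | apply pr_ex
    | apply pr_or
    | apply pr_and
    | apply pr_mem
    | apply pr_eq
    | apply pr_le
    | apply pr_lt
    | apply pr_crs
    | apply pr_ins
    | apply pr_res
    | apply pr_spA
    | exact pr_thr
    | apply pr_map
    | apply pr_permL
    | apply pr_pair
    | apply pr_cons
    | apply pr_app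
    | apply pr_tail
    | apply pr_head
    | apply pr_some
    | apply pr_succ

/-- For every `k`, the `k`-bounded state reachability problem for
DCPSs is decidable: there is an algorithm which, given a DCPS `M` and a target set
`F`, decides whether some `q ∈ F` is `k`-bounded reachable by `M`. -/
theorem bsrK_decidable (k : ℕ) :
    ComputablePred (fun x : Inst => ∃ q ∈ x.2.2, KBoundedReachable (instDCPS x) k q) := by
  refine ComputablePred.computable_iff_re_compl_re'.2 ⟨?_, ?_⟩
  · exact (re_of_primrec (pr_run k)).of_eq fun x => (reach_iff k x).symm
  · refine (re_of_primrec (β := Cert) (p := fun x z => Ok k x z.1 z.2.1 z.2.2.1 z.2.2.2)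
      (pr_Ok k)).of_eq fun x => ⟨?_, ?_⟩
    · rintro ⟨z, hz⟩
      exact hz.sound
    · intro h
      obtain ⟨C, Ws, D, Inv, h⟩ := complete k x h
      exact ⟨(C, Ws, D, Inv), h⟩

end DCPSFormal
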